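/- arXiv:2002.05240 — 3 statements merged into one kernel-verified Lean document; each statement's English description precedes it below -/
import Mathlib

section
/- Fix an integer k ≥ 2, an integer n ≥ 1, and battlefield values v_1,…,v_n > 0 with V = Σ_{j=1}^n v_j. Suppose there is a partition function π : [n] → [k] such that Σ_{j ∈ π^{-1}(m)} v_j = V/k for every m ∈ [k]. Then there exists a probability measure μ on ℝ^n such that: (i) μ-almost surely every coordinate A_j is nonnegative and Σ_{j=1}^n A_j = 1; (ii) for every j ∈ [n] and x ≥ 0, μ{A : A_j ≤ x} = min(1, (V·x/(k·v_j))^{1/(k-1)}); and (iii) if all k players independently sample their bid vectors from μ, they are in Nash equilibrium: for every probability measure ν on ℝ^n that is almost surely nonnegative with coordinate sum at most 1, the expected payoff of a single player drawing from ν while the other k−1 players draw independently from μ is at most V/k, which is the expected payoff each player receives under symmetric play of μ. -/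
open MeasureTheory

open Classical in
/-- Colonel Blotto payoff: each battlefield's value is split evenly among
the players tied for the highest bid on it. -/
noncomputable def blottoPayoff {k n : ℕ} (v : Fin n → ℝ) (A : Fin k → Fin n → ℝ)
    (i : Fin k) : ℝ :=
  ∑ j, if ∀ i', A i' j ≤ A i j then
      v j / ((Finset.univ.filter fun i' : Fin k => ∀ i'', A i'' j ≤ A i' j).card : ℝ)
    else 0

/-- The strategy profile where player `i₀` plays `ν` and everyone else plays `μ`. -/
noncomputable def devFamily {α : Type*} [MeasurableSpace α] {k : ℕ} (i₀ : Fin k)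
    (μ ν : Measure α) : Fin k → Measure α :=
  fun i => if i = i₀ then ν else μ

theorem devFamily_prob {α : Type*} [MeasurableSpace α] {k : ℕ} (i₀ : Fin k)
    (μ ν : Measure α) (hμ : IsProbabilityMeasure μ) (hν : IsProbabilityMeasure ν) :
    ∀ i, IsProbabilityMeasure (devFamily i₀ μ ν i) := by
  intro i
  unfold devFamily
  split <;> assumption

/-- Expected payoff of player `i` when each player `i'` independently samples its
bid vector from `P i'`. -/
noncomputable def expectedPayoff {k n : ℕ} (v : Fin n → ℝ)
    (P : Fin k → Measure (Fin n → ℝ)) (hP : ∀ i, IsProbabilityMeasure (P i))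
    (i : Fin k) : ℝ :=
  haveI := hP
  ∫ A, blottoPayoff v A i ∂(Measure.pi P)

/-!
Against `k - 1` opponents drawing from `μ`, a bid of `x` on battlefield `j` is not outbid with
probability `μ {A | A j ≤ x} ^ (k - 1)`, which the prescribed marginals bound by `V x / (k v_j)`.
Value is thus bought at a linear price, at most `V / k` for the whole budget, so no deviation earns
more; symmetric play earns exactly `V / k` by exchangeability.

To realise the marginals, a Dirichlet vector with all parameters `1 / (k - 1)` allocates the budget
to the `k` blocks of the partition, and each block spreads its share in proportion to the values.
A Dirichlet coordinate is `X / (X + Y)` with `X` of law `Gamma (1 / (k - 1))` and `Y` an independent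
sum of `k - 1` such variables, hence exponential, and conditioning on `X` turns its distribution
function into the moment generating function of `X`.
-/

section Gamma

open ProbabilityTheory Filter
open scoped Topology

theorem eq_of_mgf_id_eventuallyEq {μ ν : Measure ℝ} [IsProbabilityMeasure μ]
    [IsProbabilityMeasure ν] (hμ : 0 ∈ interior (integrableExpSet id μ))
    (h : mgf id μ =ᶠ[𝓝 0] mgf id ν) : μ = ν := by
  have hν : 0 ∈ interior (integrableExpSet id ν) := by
    rw [mem_interior_iff_mem_nhds] at hμ ⊢
    filter_upwards [h, hμ] with t ht htμ
    exact mgf_pos_iff.1 (ht ▸ mgf_pos htμ)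
  -- Both complex mgfs are analytic on a strip around the imaginary axis, so agreement near `0` on
  -- the real line propagates to the characteristic functions.
  set S : Set ℝ := interior (integrableExpSet id μ) ∩ interior (integrableExpSet id ν)
  have hS : Convex ℝ S := convex_integrableExpSet.interior.inter convex_integrableExpSet.interior
  have hreal : Tendsto Complex.ofReal (𝓝[≠] 0) (𝓝[≠] 0) :=
    (Complex.continuous_ofReal.tendsto' 0 0 Complex.ofReal_zero).inf
      (tendsto_principal_principal.2 fun _ => Complex.ofReal_ne_zero.2)
  have hfreq : ∃ᶠ z in 𝓝[≠] (0 : ℂ), complexMGF id μ z = complexMGF id ν z := by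
    refine hreal.frequently (Eventually.frequently ?_)
    filter_upwards [nhdsWithin_le_nhds h] with t ht
    rw [complexMGF_ofReal, complexMGF_ofReal, ht]
  have heq : Set.EqOn (complexMGF id μ) (complexMGF id ν) {z | z.re ∈ S} :=
    AnalyticOnNhd.eqOn_of_preconnected_of_frequently_eq
      (analyticOnNhd_complexMGF.mono fun _ hz => hz.1)
      (analyticOnNhd_complexMGF.mono fun _ hz => hz.2)
      (hS.linear_preimage Complex.reLm).isPreconnected (z₀ := 0) ⟨hμ, hν⟩ hfreq
  refine Measure.ext_of_charFun (funext fun t => ?_)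
  rw [← complexMGF_id_mul_I, ← complexMGF_id_mul_I]
  exact heq (by simpa using ⟨hμ, hν⟩)

variable {a r t : ℝ}

theorem measurable_gammaPDF (a r : ℝ) : Measurable (gammaPDF a r) :=
  (measurable_gammaPDFReal a r).ennreal_ofReal

theorem ae_pos_gammaMeasure (a r : ℝ) : ∀ᵐ x ∂gammaMeasure a r, 0 < x := by
  rw [gammaMeasure, ae_withDensity_iff (measurable_gammaPDF a r)]
  filter_upwards [Measure.ae_ne volume 0] with x hx hpdf
  by_contra hpos
  exact hpdf (gammaPDF_of_neg (lt_of_le_of_ne (not_lt.1 hpos) hx))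

theorem exp_mul_mul_gammaPDFReal (a : ℝ) (hr : 0 ≤ r) (ht : t < r) (x : ℝ) :
    Real.exp (t * x) * gammaPDFReal a r x = (r / (r - t)) ^ a * gammaPDFReal a (r - t) x := by
  have hrt : 0 < r - t := sub_pos.2 ht
  have hexp : Real.exp (-((r - t) * x)) = Real.exp (t * x) * Real.exp (-(r * x)) := by
    rw [← Real.exp_add]
    ring_nf
  unfold gammaPDFReal
  split_ifs
  · rw [hexp, Real.div_rpow hr hrt.le]
    field_simp
  · simp only [mul_zero]

theorem lintegral_exp_mul_gammaMeasure (ha : 0 < a) (hr : 0 ≤ r) (ht : t < r) :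
    ∫⁻ x, ENNReal.ofReal (Real.exp (t * x)) ∂gammaMeasure a r =
      ENNReal.ofReal ((r / (r - t)) ^ a) := by
  have hrt : 0 < r - t := sub_pos.2 ht
  calc ∫⁻ x, ENNReal.ofReal (Real.exp (t * x)) ∂gammaMeasure a r
      = ∫⁻ x, gammaPDF a r x * ENNReal.ofReal (Real.exp (t * x)) :=
        lintegral_withDensity_eq_lintegral_mul _ (measurable_gammaPDF a r) (by fun_prop)
    _ = ∫⁻ x, ENNReal.ofReal ((r / (r - t)) ^ a) * gammaPDF a (r - t) x := by
        refine lintegral_congr fun x => ?_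
        rw [mul_comm, gammaPDF, gammaPDF, ← ENNReal.ofReal_mul (Real.exp_pos _).le,
          ← ENNReal.ofReal_mul (by positivity), exp_mul_mul_gammaPDFReal a hr ht]
    _ = ENNReal.ofReal ((r / (r - t)) ^ a) := by
        rw [lintegral_const_mul _ (measurable_gammaPDF a _), lintegral_gammaPDF_eq_one ha hrt,
          mul_one]

theorem integrable_exp_mul_gammaMeasure (ha : 0 < a) (hr : 0 ≤ r) (ht : t < r) :
    Integrable (fun x => Real.exp (t * x)) (gammaMeasure a r) := by
  refine ⟨by fun_prop, ?_⟩
  rw [hasFiniteIntegral_iff_ofReal (ae_of_all _ fun _ => (Real.exp_pos _).le),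
    lintegral_exp_mul_gammaMeasure ha hr ht]
  exact ENNReal.ofReal_lt_top

theorem mgf_id_gammaMeasure (ha : 0 < a) (hr : 0 ≤ r) (ht : t < r) :
    mgf id (gammaMeasure a r) t = (r / (r - t)) ^ a := by
  have : 0 < r - t := sub_pos.2 ht
  simp only [mgf, id]
  rw [integral_eq_lintegral_of_nonneg_ae (ae_of_all _ fun _ => (Real.exp_pos _).le)
    (by fun_prop), lintegral_exp_mul_gammaMeasure ha hr ht, ENNReal.toReal_ofReal (by positivity)]

theorem zero_mem_interior_integrableExpSet_gammaMeasure (ha : 0 < a) (hr : 0 < r) :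
    0 ∈ interior (integrableExpSet id (gammaMeasure a r)) :=
  mem_interior_iff_mem_nhds.2 <| mem_of_superset (Iio_mem_nhds hr) fun _ ht =>
    integrable_exp_mul_gammaMeasure ha hr.le ht

variable {Ω : Type*} {mΩ : MeasurableSpace Ω} {P : Measure Ω}

theorem hasLaw_sum_gammaMeasure {ι : Type*} {X : ι → Ω → ℝ} {α : ι → ℝ} (hα : ∀ i, 0 < α i)
    (hr : 0 < r) (hX : ∀ i, HasLaw (X i) (gammaMeasure (α i) r) P) (hind : iIndepFun X P)
    {s : Finset ι} (hs : s.Nonempty) :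
    HasLaw (∑ i ∈ s, X i) (gammaMeasure (∑ i ∈ s, α i) r) P := by
  have hsum : 0 < ∑ i ∈ s, α i := Finset.sum_pos (fun i _ => hα i) hs
  have hmeas : ∀ i, AEMeasurable (X i) P := fun i => (hX i).aemeasurable
  have hmeas_sum : AEMeasurable (∑ i ∈ s, X i) P := Finset.aemeasurable_sum _ fun i _ => hmeas i
  have := hind.isProbabilityMeasure
  have := isProbabilityMeasure_gammaMeasure hsum hr
  have := Measure.isProbabilityMeasure_map hmeas_sum
  refine ⟨hmeas_sum, (eq_of_mgf_id_eventuallyEq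
    (zero_mem_interior_integrableExpSet_gammaMeasure hsum hr) ?_).symm⟩
  filter_upwards [Iio_mem_nhds hr] with t ht
  have hmgf (i : ι) : mgf (X i) P t = (r / (r - t)) ^ α i := by
    rw [← mgf_id_map (hmeas i), (hX i).map_eq, mgf_id_gammaMeasure (hα i) hr.le ht]
  rw [mgf_id_gammaMeasure hsum hr.le ht, mgf_id_map hmeas_sum, hind.mgf_sum₀ hmeas,
    Finset.prod_congr rfl fun i _ => hmgf i,
    Real.rpow_sum_of_pos (div_pos hr (sub_pos.2 ht))]

theorem expMeasure_Ici (hr : 0 < r) {x : ℝ} (hx : 0 ≤ x) :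
    expMeasure r (Set.Ici x) = ENNReal.ofReal (Real.exp (-(r * x))) := by
  have := isProbabilityMeasure_expMeasure hr
  have : NullSingletonClass (expMeasure r) := nullSingletonClass_withDensity _
  have hcdf := cdf_expMeasure_eq hr x
  rw [cdf_eq_real, if_pos hx] at hcdf
  rw [← measure_congr Ioi_ae_eq_Ici, ← Set.compl_Iic, ← ofReal_measureReal,
    probReal_compl_eq_one_sub measurableSet_Iic, hcdf, sub_sub_cancel]

variable {X Y : Ω → ℝ}

theorem measure_mul_le_of_hasLaw_gammaMeasure_expMeasure (ha : 0 < a) (hr : 0 < r)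
    (hX : HasLaw X (gammaMeasure a r) P) (hY : HasLaw Y (expMeasure r) P)
    (hind : IndepFun X Y P) {s : ℝ} (hs : 0 ≤ s) :
    P {ω | s * X ω ≤ Y ω} = ENNReal.ofReal ((1 + s)⁻¹ ^ a) := by
  have := isProbabilityMeasure_expMeasure hr
  have := isProbabilityMeasure_gammaMeasure ha hr
  have := hX.isProbabilityMeasure
  have hmeas : MeasurableSet {p : ℝ × ℝ | s * p.1 ≤ p.2} :=
    measurableSet_le (by fun_prop) (by fun_prop)
  have hslice : ∀ᵐ x ∂gammaMeasure a r, expMeasure r (Prod.mk x ⁻¹' {p | s * p.1 ≤ p.2}) =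
      ENNReal.ofReal (Real.exp (-(r * s) * x)) := by
    filter_upwards [ae_pos_gammaMeasure a r] with x hx
    have hsx : 0 ≤ s * x := by positivity
    rw [neg_mul, mul_assoc]
    exact expMeasure_Ici hr hsx
  have hrate : r / (r - -(r * s)) = (1 + s)⁻¹ := by
    rw [show r - -(r * s) = r * (1 + s) by ring]
    field_simp
  rw [(hind.hasLaw_prod hX hY).measure_eq hmeas, Measure.prod_apply hmeas,
    lintegral_congr_ae hslice,
    lintegral_exp_mul_gammaMeasure ha hr.le (by nlinarith : -(r * s) < r), hrate]

theorem measure_div_add_le_of_hasLaw_gammaMeasure_expMeasure (ha : 0 < a) (hr : 0 < r)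
    (hX : HasLaw X (gammaMeasure a r) P) (hY : HasLaw Y (expMeasure r) P)
    (hind : IndepFun X Y P) {y : ℝ} (hy : 0 ≤ y) :
    P {ω | X ω / (X ω + Y ω) ≤ y} = ENNReal.ofReal (min 1 (y ^ a)) := by
  have := isProbabilityMeasure_gammaMeasure ha hr
  have := hX.isProbabilityMeasure
  have hpos : ∀ᵐ ω ∂P, 0 < X ω ∧ 0 < Y ω :=
    ((hX.ae_iff (by fun_prop)).2 (ae_pos_gammaMeasure a r)).and
      ((hY.ae_iff (by fun_prop)).2 (ae_pos_gammaMeasure 1 r))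
  rcases hy.eq_or_lt with rfl | hy0
  · rw [Real.zero_rpow ha.ne', min_eq_right zero_le_one, ENNReal.ofReal_zero,
      measure_eq_zero_iff_ae_notMem]
    filter_upwards [hpos] with ω ⟨hXω, hYω⟩
    exact not_le.2 (by positivity)
  rcases le_total 1 y with hy1 | hy1
  · rw [min_eq_left (Real.one_le_rpow hy1 ha.le), ENNReal.ofReal_one, ← measure_univ (μ := P)]
    refine measure_congr (eventuallyEq_set.2 ?_)
    filter_upwards [hpos] with ω ⟨hXω, hYω⟩
    refine iff_of_true (le_trans ?_ hy1) trivial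
    exact div_le_one_of_le₀ (by linarith) (by positivity)
  · have hs : 0 ≤ (1 - y) / y := div_nonneg (sub_nonneg.2 hy1) hy
    have hinv : (1 + (1 - y) / y)⁻¹ = y := by
      field_simp
      ring
    rw [min_eq_right (Real.rpow_le_one hy hy1 ha.le)]
    nth_rw 2 [← hinv]
    rw [← measure_mul_le_of_hasLaw_gammaMeasure_expMeasure ha hr hX hY hind hs]
    refine measure_congr (eventuallyEq_set.2 ?_)
    filter_upwards [hpos] with ω ⟨hXω, hYω⟩
    rw [div_le_iff₀ (by positivity), div_mul_eq_mul_div, div_le_iff₀ hy0]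
    constructor <;> intro h <;> linarith

end Gamma

section Dirichlet

open ProbabilityTheory

variable {ι : Type*} [Fintype ι] {α : ι → ℝ}

/-- The Dirichlet distribution with parameters `α`, realised by normalising independent
`Gamma (α i)` variables to total mass one. -/
noncomputable def dirichletMeasure (α : ι → ℝ) : Measure (ι → ℝ) :=
  (Measure.pi fun i => gammaMeasure (α i) 1).map fun g i => g i / ∑ j, g j

theorem isProbabilityMeasure_dirichletMeasure (hα : ∀ i, 0 < α i) :
    IsProbabilityMeasure (dirichletMeasure α) := by
  have := fun i => isProbabilityMeasure_gammaMeasure (hα i) one_pos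
  exact Measure.isProbabilityMeasure_map (by fun_prop)

theorem ae_mem_stdSimplex_dirichletMeasure [Nonempty ι] (hα : ∀ i, 0 < α i) :
    ∀ᵐ X ∂dirichletMeasure α, X ∈ stdSimplex ℝ ι := by
  have := fun i => isProbabilityMeasure_gammaMeasure (hα i) one_pos
  have hpos : ∀ᵐ g ∂Measure.pi fun i => gammaMeasure (α i) 1, ∀ i, 0 < g i :=
    ae_all_iff.2 fun i => (measurePreserving_eval _ i).quasiMeasurePreserving.ae
      (ae_pos_gammaMeasure (α i) 1)
  rw [dirichletMeasure, ae_map_iff (p := (· ∈ stdSimplex ℝ ι)) (by fun_prop)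
    (isClosed_stdSimplex ℝ ι).measurableSet]
  filter_upwards [hpos] with g hg
  have hsum : 0 < ∑ j, g j := Finset.sum_pos (fun i _ => hg i) Finset.univ_nonempty
  exact ⟨fun i => (div_pos (hg i) hsum).le, by rw [← Finset.sum_div, div_self hsum.ne']⟩

theorem dirichletMeasure_setOf_le [DecidableEq ι] (hα : ∀ i, 0 < α i) (i : ι)
    (hi : ∑ j ∈ Finset.univ.erase i, α j = 1) {y : ℝ} (hy : 0 ≤ y) :
    dirichletMeasure α {X | X i ≤ y} = ENNReal.ofReal (min 1 (y ^ α i)) := by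
  have := fun i => isProbabilityMeasure_gammaMeasure (hα i) one_pos
  set P := Measure.pi fun i => gammaMeasure (α i) 1
  have hlaw (j : ι) : HasLaw (fun g : ι → ℝ => g j) (gammaMeasure (α j) 1) P :=
    (measurePreserving_eval (fun i => gammaMeasure (α i) 1) j).hasLaw
  have hind : iIndepFun (fun (j : ι) (g : ι → ℝ) => g j) P :=
    iIndepFun_pi (X := fun _ => id) fun _ => aemeasurable_id
  have hne : (Finset.univ.erase i).Nonempty :=
    Finset.nonempty_of_sum_ne_zero (hi ▸ one_ne_zero)
  have hrest : HasLaw (∑ j ∈ Finset.univ.erase i, fun g : ι → ℝ => g j) (expMeasure 1) P := by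
    have h := hasLaw_sum_gammaMeasure hα one_pos hlaw hind hne
    rwa [hi] at h
  rw [dirichletMeasure, Measure.map_apply (by fun_prop)
    (measurableSet_le (by fun_prop) (by fun_prop)),
    ← measure_div_add_le_of_hasLaw_gammaMeasure_expMeasure (hα i) one_pos (hlaw i) hrest
      (hind.indepFun_finsetSum_of_notMem (fun j => measurable_pi_apply j)
        (Finset.notMem_erase i _)).symm hy]
  congr 1 with g
  simp only [Set.mem_preimage, Set.mem_ofPred_eq, Finset.sum_apply]
  rw [Finset.add_sum_erase _ _ (Finset.mem_univ i)]

end Dirichlet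

section Payoff

variable {k n : ℕ}

open Classical in
theorem blottoPayoff_le {v : Fin n → ℝ} (hv : ∀ j, 0 ≤ v j) (A : Fin k → Fin n → ℝ)
    (i : Fin k) : blottoPayoff v A i ≤ ∑ j, if ∀ i', A i' j ≤ A i j then v j else 0 := by
  refine Finset.sum_le_sum fun j _ => ?_
  split_ifs
  · exact div_nat_le_self_of_nonnneg (hv j) _
  · exact le_rfl

theorem abs_blottoPayoff_le (v : Fin n → ℝ) (A : Fin k → Fin n → ℝ) (i : Fin k) :
    |blottoPayoff v A i| ≤ ∑ j, |v j| := by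
  refine (Finset.abs_sum_le_sum_abs _ _).trans (Finset.sum_le_sum fun j _ => ?_)
  split_ifs
  · rw [abs_div, Nat.abs_cast]
    exact div_nat_le_self_of_nonnneg (abs_nonneg _) _
  · simp only [abs_zero, abs_nonneg]

theorem blottoPayoff_comp_perm (v : Fin n → ℝ) (A : Fin k → Fin n → ℝ)
    (σ : Equiv.Perm (Fin k)) (i : Fin k) :
    blottoPayoff v (A ∘ σ) i = blottoPayoff v A (σ i) := by
  classical
  have htop (i' : Fin k) (j : Fin n) :
      (∀ i'', (A ∘ σ) i'' j ≤ (A ∘ σ) i' j) ↔ ∀ i'', A i'' j ≤ A (σ i') j :=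
    σ.forall_congr_left.trans (by simp)
  have hcard (j : Fin n) :
      (Finset.univ.filter fun i' => ∀ i'', A i'' j ≤ A (σ i') j).card =
        (Finset.univ.filter fun i' => ∀ i'', A i'' j ≤ A i' j).card :=
    Finset.card_equiv σ fun i' => by simp
  simp only [blottoPayoff, htop]
  refine Finset.sum_congr rfl fun j _ => ?_
  congr! 3
  exact hcard j

theorem sum_blottoPayoff [NeZero k] (v : Fin n → ℝ) (A : Fin k → Fin n → ℝ) :
    ∑ i, blottoPayoff v A i = ∑ j, v j := by
  classical
  simp only [blottoPayoff]
  rw [Finset.sum_comm]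
  refine Finset.sum_congr rfl fun j _ => ?_
  obtain ⟨i, hi⟩ := Finite.exists_max fun i => A i j
  have hcard : ((Finset.univ.filter fun i' => ∀ i'', A i'' j ≤ A i' j).card : ℝ) ≠ 0 :=
    Nat.cast_ne_zero.2 (Finset.card_ne_zero_of_mem (Finset.mem_filter.2 ⟨Finset.mem_univ i, hi⟩))
  rw [← Finset.sum_filter, Finset.sum_const, nsmul_eq_mul]
  convert mul_div_cancel₀ (v j) hcard using 1

theorem measurableSet_forall_apply_le (i : Fin k) (j : Fin n) :
    MeasurableSet {A : Fin k → Fin n → ℝ | ∀ i', A i' j ≤ A i j} := by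
  measurability

theorem measurable_blottoPayoff (v : Fin n → ℝ) (i : Fin k) :
    Measurable fun A : Fin k → Fin n → ℝ => blottoPayoff v A i := by
  classical
  refine Finset.measurable_sum _ fun j _ =>
    Measurable.ite (measurableSet_forall_apply_le i j) (measurable_const.div ?_) measurable_const
  simp only [Finset.card_filter, Nat.cast_sum, Nat.cast_ite, Nat.cast_one, Nat.cast_zero]
  exact Finset.measurable_sum _ fun i' _ =>
    Measurable.ite (measurableSet_forall_apply_le i' j) measurable_const measurable_const

theorem integrable_blottoPayoff (v : Fin n → ℝ) (P : Measure (Fin k → Fin n → ℝ))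
    [IsFiniteMeasure P] (i : Fin k) : Integrable (fun A => blottoPayoff v A i) P :=
  .of_bound (measurable_blottoPayoff v i).aestronglyMeasurable (∑ j, |v j|)
    (ae_of_all _ fun A => abs_blottoPayoff_le v A i)

theorem expectedPayoff_const_perm (v : Fin n → ℝ) (μ : Measure (Fin n → ℝ))
    (hμ : IsProbabilityMeasure μ) (σ : Equiv.Perm (Fin k)) (i : Fin k) :
    expectedPayoff v (fun _ => μ) (fun _ => hμ) (σ i) =
      expectedPayoff v (fun _ => μ) (fun _ => hμ) i := by
  have hσ := measurePreserving_piCongrLeft (fun _ : Fin k => μ) σ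
  unfold expectedPayoff
  rw [← hσ.integral_comp']
  refine integral_congr_ae (ae_of_all _ fun A => ?_)
  dsimp only
  rw [← blottoPayoff_comp_perm]
  congr 1
  ext i' : 1
  exact Equiv.piCongrLeft_apply_apply (fun _ => Fin n → ℝ) σ A i'

theorem expectedPayoff_const (v : Fin n → ℝ) (μ : Measure (Fin n → ℝ))
    (hμ : IsProbabilityMeasure μ) (i : Fin k) :
    expectedPayoff v (fun _ => μ) (fun _ => hμ) i = (∑ j, v j) / k := by
  have : NeZero k := ⟨i.pos.ne'⟩
  have hsymm (i' : Fin k) : expectedPayoff v (fun _ => μ) (fun _ => hμ) i' =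
      expectedPayoff v (fun _ => μ) (fun _ => hμ) i := by
    simpa using expectedPayoff_const_perm v μ hμ (Equiv.swap i i') i
  have hsum : ∑ i', expectedPayoff v (fun _ : Fin k => μ) (fun _ => hμ) i' = ∑ j, v j := by
    unfold expectedPayoff
    rw [← integral_finsetSum _ fun i _ => integrable_blottoPayoff v _ i]
    simp [sum_blottoPayoff]
  rw [eq_div_iff (NeZero.ne _), ← hsum, Finset.sum_congr rfl fun i' _ => hsymm i']
  simp [mul_comm]

theorem pi_devFamily_setOf_forall_le (μ ν : Measure (Fin n → ℝ)) (hμ : IsProbabilityMeasure μ)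
    (hν : IsProbabilityMeasure ν) (i₀ : Fin k) (j : Fin n) :
    Measure.pi (devFamily i₀ μ ν) {A | ∀ i, A i j ≤ A i₀ j} =
      ∫⁻ b, μ {A | A j ≤ b j} ^ (k - 1) ∂ν := by
  obtain _ | k := k
  · exact i₀.elim0
  have := devFamily_prob i₀ μ ν hμ hν
  let S : Set ((Fin n → ℝ) × (Fin k → Fin n → ℝ)) := {p | ∀ i, p.2 i j ≤ p.1 j}
  have hS : MeasurableSet S := by measurability
  have hpre : {A : Fin (k + 1) → Fin n → ℝ | ∀ i, A i j ≤ A i₀ j} =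
      MeasurableEquiv.piFinSuccAbove (fun _ => Fin n → ℝ) i₀ ⁻¹' S := by
    ext A
    simp [S, Fin.forall_iff_succAbove i₀, MeasurableEquiv.piFinSuccAbove_apply, Fin.removeNth]
  have hslice (b : Fin n → ℝ) : Prod.mk b ⁻¹' S = Set.univ.pi fun _ => {A | A j ≤ b j} := by
    ext
    simp [S]
  rw [hpre, (measurePreserving_piFinSuccAbove _ i₀).measure_preimage hS.nullMeasurableSet,
    Measure.prod_apply hS]
  simp [hslice, devFamily, Fin.succAbove_ne]

theorem measurable_measure_setOf_apply_le (μ : Measure (Fin n → ℝ)) (j : Fin n) :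
    Measurable fun b : Fin n → ℝ => μ {A | A j ≤ b j} := by
  have hmono : Monotone fun x : ℝ => μ {A | A j ≤ x} := fun x y hxy =>
    measure_mono fun A (hA : A j ≤ x) => hA.trans hxy
  exact hmono.measurable.comp (measurable_pi_apply j)

theorem expectedPayoff_devFamily_le_sum {v : Fin n → ℝ} (hv : ∀ j, 0 ≤ v j)
    (μ ν : Measure (Fin n → ℝ)) (hμ : IsProbabilityMeasure μ) (hν : IsProbabilityMeasure ν)
    (i₀ : Fin k) :
    expectedPayoff v (devFamily i₀ μ ν) (devFamily_prob i₀ μ ν hμ hν) i₀ ≤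
      ∑ j, v j * ∫ b, μ.real {A | A j ≤ b j} ^ (k - 1) ∂ν := by
  classical
  have := devFamily_prob i₀ μ ν hμ hν
  have hint (j : Fin n) : Integrable ({A : Fin k → Fin n → ℝ | ∀ i, A i j ≤ A i₀ j}.indicator
      fun _ => v j) (Measure.pi (devFamily i₀ μ ν)) :=
    (integrable_const _).indicator (measurableSet_forall_apply_le i₀ j)
  have hwin (j : Fin n) : (Measure.pi (devFamily i₀ μ ν)).real {A | ∀ i, A i j ≤ A i₀ j} =
      ∫ b, μ.real {A | A j ≤ b j} ^ (k - 1) ∂ν := by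
    simp only [measureReal_def, ← ENNReal.toReal_pow]
    rw [pi_devFamily_setOf_forall_le μ ν hμ hν,
      integral_toReal ((measurable_measure_setOf_apply_le μ j).pow_const _).aemeasurable
        (ae_of_all _ fun _ => by finiteness)]
  calc expectedPayoff v (devFamily i₀ μ ν) (devFamily_prob i₀ μ ν hμ hν) i₀
      ≤ ∫ A, ∑ j, {A : Fin k → Fin n → ℝ | ∀ i, A i j ≤ A i₀ j}.indicator (fun _ => v j) A
          ∂Measure.pi (devFamily i₀ μ ν) := by
        refine integral_mono (integrable_blottoPayoff v _ i₀)
          (integrable_finsetSum _ fun j _ => hint j) fun A => ?_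
        simpa only [Set.indicator_apply, Set.mem_ofPred_eq] using blottoPayoff_le hv A i₀
    _ = ∑ j, v j * ∫ b, μ.real {A | A j ≤ b j} ^ (k - 1) ∂ν := by
        rw [integral_finsetSum _ fun j _ => hint j]
        refine Finset.sum_congr rfl fun j _ => ?_
        rw [integral_indicator_const _ (measurableSet_forall_apply_le i₀ j), hwin, smul_eq_mul,
          mul_comm]

theorem expectedPayoff_devFamily_le {v : Fin n → ℝ} (hv : ∀ j, 0 ≤ v j)
    (μ ν : Measure (Fin n → ℝ)) (hμ : IsProbabilityMeasure μ) (hν : IsProbabilityMeasure ν)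
    {c : ℝ} (hc : 0 ≤ c)
    (hprice : ∀ j, ∀ x : ℝ, 0 ≤ x → v j * μ.real {A | A j ≤ x} ^ (k - 1) ≤ c * x)
    (hbudget : ∀ᵐ A ∂ν, (∀ j, 0 ≤ A j) ∧ ∑ j, A j ≤ 1) (i₀ : Fin k) :
    expectedPayoff v (devFamily i₀ μ ν) (devFamily_prob i₀ μ ν hμ hν) i₀ ≤ c := by
  have hint (j : Fin n) :
      Integrable (fun b : Fin n → ℝ => v j * μ.real {A | A j ≤ b j} ^ (k - 1)) ν := by
    refine Integrable.const_mul (.of_bound ?_ 1 (ae_of_all _ fun b => ?_)) _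
    · have hcdf := (measurable_measure_setOf_apply_le μ j).ennreal_toReal
      exact (hcdf.pow_const _).aestronglyMeasurable
    · rw [Real.norm_of_nonneg (by positivity)]
      exact pow_le_one₀ measureReal_nonneg measureReal_le_one
  calc expectedPayoff v (devFamily i₀ μ ν) (devFamily_prob i₀ μ ν hμ hν) i₀
      ≤ ∑ j, v j * ∫ b, μ.real {A | A j ≤ b j} ^ (k - 1) ∂ν :=
        expectedPayoff_devFamily_le_sum hv μ ν hμ hν i₀
    _ = ∫ b, ∑ j, v j * μ.real {A | A j ≤ b j} ^ (k - 1) ∂ν := by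
        simp only [integral_finsetSum _ fun j _ => hint j, integral_const_mul]
    _ ≤ ∫ _, c ∂ν := by
        refine integral_mono_ae (integrable_finsetSum _ fun j _ => hint j) (integrable_const c) ?_
        filter_upwards [hbudget] with b ⟨hb, hb1⟩
        calc ∑ j, v j * μ.real {A | A j ≤ b j} ^ (k - 1)
            ≤ ∑ j, c * b j := Finset.sum_le_sum fun j _ => hprice j _ (hb j)
          _ = c * ∑ j, b j := (Finset.mul_sum _ _ _).symm
          _ ≤ c := mul_le_of_le_one_right hc hb1
    _ = c := by simp

end Payoff

section Equilibrium

variable {k n : ℕ} {v : Fin n → ℝ} {part : Fin n → Fin k}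

/-- Block `m` of the partition receives the fraction `X m` of the budget and spreads it over its
battlefields in proportion to their values. -/
noncomputable def partitionBid (v : Fin n → ℝ) (part : Fin n → Fin k) (X : Fin k → ℝ) :
    Fin n → ℝ :=
  fun j => k * v j / (∑ l, v l) * X (part j)

/-- The equilibrium strategy: the `partitionBid` of a Dirichlet vector. The parameter
`1 / (k - 1)` makes the other `k - 1` gamma variables add up to an exponential one. -/
noncomputable def partitionStrategy (v : Fin n → ℝ) (part : Fin n → Fin k) :
    Measure (Fin n → ℝ) :=
  (dirichletMeasure fun _ : Fin k => 1 / ((k : ℝ) - 1)).map (partitionBid v part)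

theorem measurable_partitionBid (v : Fin n → ℝ) (part : Fin n → Fin k) :
    Measurable (partitionBid v part) := by
  unfold partitionBid
  fun_prop

theorem partitionBid_mem_stdSimplex (hv : ∀ j, 0 ≤ v j) (hV : 0 < ∑ l, v l)
    (hpart : ∀ m, ∑ j with part j = m, v j = (∑ l, v l) / k) {X : Fin k → ℝ}
    (hX : X ∈ stdSimplex ℝ (Fin k)) : partitionBid v part X ∈ stdSimplex ℝ (Fin n) := by
  refine ⟨fun j => mul_nonneg (by have := hv j; positivity) (hX.1 _), ?_⟩
  have hblock (m : Fin k) : ∑ j with part j = m, partitionBid v part X j = X m := by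
    have hk : (k : ℝ) ≠ 0 := Nat.cast_ne_zero.2 m.pos.ne'
    calc ∑ j with part j = m, partitionBid v part X j
        = ∑ j with part j = m, k / (∑ l, v l) * X m * v j :=
          Finset.sum_congr rfl fun j hj => by
            rw [partitionBid, (Finset.mem_filter.1 hj).2]
            ring
      _ = X m := by
          rw [← Finset.mul_sum, hpart]
          field_simp
  rw [← Finset.sum_fiberwise _ part, Finset.sum_congr rfl fun m _ => hblock m, hX.2]

theorem one_div_natCast_sub_one_pos (hk : 2 ≤ k) : (0 : ℝ) < 1 / ((k : ℝ) - 1) :=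
  one_div_pos.2 (sub_pos.2 (Nat.one_lt_cast.2 hk))

theorem isProbabilityMeasure_partitionStrategy (hk : 2 ≤ k) (v : Fin n → ℝ)
    (part : Fin n → Fin k) : IsProbabilityMeasure (partitionStrategy v part) := by
  have := isProbabilityMeasure_dirichletMeasure fun _ : Fin k => one_div_natCast_sub_one_pos hk
  exact Measure.isProbabilityMeasure_map (measurable_partitionBid v part).aemeasurable

theorem ae_mem_stdSimplex_partitionStrategy (hk : 2 ≤ k) (hv : ∀ j, 0 ≤ v j)
    (hV : 0 < ∑ l, v l) (hpart : ∀ m, ∑ j with part j = m, v j = (∑ l, v l) / k) :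
    ∀ᵐ A ∂partitionStrategy v part, A ∈ stdSimplex ℝ (Fin n) := by
  have : Nonempty (Fin k) := ⟨⟨0, by omega⟩⟩
  rw [partitionStrategy, ae_map_iff (p := (· ∈ stdSimplex ℝ (Fin n)))
    (measurable_partitionBid v part).aemeasurable (isClosed_stdSimplex ℝ (Fin n)).measurableSet]
  filter_upwards [ae_mem_stdSimplex_dirichletMeasure
    fun _ : Fin k => one_div_natCast_sub_one_pos hk] with X hX
  exact partitionBid_mem_stdSimplex hv hV hpart hX

theorem partitionStrategy_setOf_le (hk : 2 ≤ k) (hV : 0 < ∑ l, v l) {j : Fin n} (hvj : 0 < v j)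
    {x : ℝ} (hx : 0 ≤ x) :
    partitionStrategy v part {A | A j ≤ x} = ENNReal.ofReal (min 1
      (((∑ l, v l) * x / ((k : ℝ) * v j)) ^ ((1 : ℝ) / ((k : ℝ) - 1)))) := by
  have hk0 : (0 : ℝ) < k := Nat.cast_pos.2 (by omega)
  have hk1 : (k : ℝ) - 1 ≠ 0 := (sub_pos.2 (Nat.one_lt_cast.2 hk)).ne'
  have hcard : ∑ _m ∈ Finset.univ.erase (part j), 1 / ((k : ℝ) - 1) = 1 := by
    simp [Finset.card_erase_of_mem, Nat.cast_pred (Nat.cast_pos.1 hk0), hk1]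
  rw [partitionStrategy, Measure.map_apply (measurable_partitionBid v part)
      (measurableSet_le (by fun_prop) (by fun_prop)),
    ← dirichletMeasure_setOf_le (fun _ => one_div_natCast_sub_one_pos hk) (part j) hcard
      (by positivity)]
  congr 1 with X
  simp only [Set.mem_preimage, Set.mem_ofPred_eq, partitionBid]
  rw [le_div_iff₀ (by positivity), div_mul_eq_mul_div, div_le_iff₀ hV, mul_comm (X _),
    mul_comm x]

theorem min_one_rpow_one_div_pow_le (hk : 2 ≤ k) {q : ℝ} (hq : 0 ≤ q) :
    min 1 (q ^ ((1 : ℝ) / ((k : ℝ) - 1))) ^ (k - 1) ≤ q := by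
  calc min 1 (q ^ ((1 : ℝ) / ((k : ℝ) - 1))) ^ (k - 1)
      ≤ (q ^ ((1 : ℝ) / ((k : ℝ) - 1))) ^ (k - 1) := by
        gcongr
        exact min_le_right _ _
    _ = q := by
        rw [← Nat.cast_pred (by omega : 0 < k), one_div, Real.rpow_inv_natCast_pow hq (by omega)]

theorem value_mul_partitionStrategy_pow_le (hk : 2 ≤ k) (hV : 0 < ∑ l, v l) {j : Fin n}
    (hvj : 0 < v j) {x : ℝ} (hx : 0 ≤ x) :
    v j * (partitionStrategy v part).real {A | A j ≤ x} ^ (k - 1) ≤ (∑ l, v l) / k * x := by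
  have hq : 0 ≤ (∑ l, v l) * x / (k * v j) := by positivity
  rw [measureReal_def, partitionStrategy_setOf_le hk hV hvj hx,
    ENNReal.toReal_ofReal (by positivity)]
  calc v j * min 1 (((∑ l, v l) * x / (k * v j)) ^ ((1 : ℝ) / ((k : ℝ) - 1))) ^ (k - 1)
      ≤ v j * ((∑ l, v l) * x / (k * v j)) := by
        gcongr
        exact min_one_rpow_one_div_pow_le hk hq
    _ = (∑ l, v l) / k * x := by field_simp

end Equilibrium

theorem stmt2 (k n : ℕ) (hk : 2 ≤ k) (hn : 1 ≤ n) (v : Fin n → ℝ) (hv : ∀ j, 0 < v j)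
    (part : Fin n → Fin k)
    (hpart : ∀ m : Fin k,
      ∑ j ∈ Finset.univ.filter (fun j => part j = m), v j = (∑ l, v l) / k) :
    ∃ (μ : Measure (Fin n → ℝ)) (hμ : IsProbabilityMeasure μ),
      (∀ᵐ A ∂μ, (∀ j, 0 ≤ A j) ∧ ∑ j, A j = 1) ∧
      (∀ j, ∀ x : ℝ, 0 ≤ x →
        μ {A : Fin n → ℝ | A j ≤ x} =
          ENNReal.ofReal (min 1
            (((∑ l, v l) * x / ((k : ℝ) * v j)) ^ ((1 : ℝ) / ((k : ℝ) - 1))))) ∧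
      (∀ i₀ : Fin k,
        (∀ (ν : Measure (Fin n → ℝ)) (hν : IsProbabilityMeasure ν),
          (∀ᵐ A ∂ν, (∀ j, 0 ≤ A j) ∧ ∑ j, A j ≤ 1) →
          expectedPayoff v (devFamily i₀ μ ν) (devFamily_prob i₀ μ ν hμ hν) i₀ ≤
            (∑ l, v l) / k) ∧
        expectedPayoff v (fun _ => μ) (fun _ => hμ) i₀ = (∑ l, v l) / k) := by
  have : Nonempty (Fin n) := ⟨⟨0, hn⟩⟩
  have hV : 0 < ∑ l, v l := Finset.sum_pos (fun j _ => hv j) Finset.univ_nonempty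
  have hv0 : ∀ j, 0 ≤ v j := fun j => (hv j).le
  have hμ := isProbabilityMeasure_partitionStrategy hk v part
  refine ⟨partitionStrategy v part, hμ, ae_mem_stdSimplex_partitionStrategy hk hv0 hV hpart,
    fun j x hx => partitionStrategy_setOf_le hk hV (hv j) hx, fun i₀ => ⟨fun ν hν hbudget => ?_,
    expectedPayoff_const v _ hμ i₀⟩⟩
  exact expectedPayoff_devFamily_le hv0 _ ν hμ hν (by positivity)
    (fun j x hx => value_mul_partitionStrategy_pow_le hk hV (hv j) hx) hbudget i₀
end

section
/- Fix an integer n ≥ 3 and battlefield values v_1,…,v_n > 0 with V = Σ_{j=1}^n v_j, and suppose v_j ≤ V/3 for every j ∈ [n]. Then there exists a probability measure μ on ℝ^n such that μ-almost surely every coordinate A_j is nonnegative and Σ_{j=1}^n A_j = 1, and for every j ∈ [n] and x ≥ 0, μ{A : A_j ≤ x} = min(1, √(V·x/(3·v_j))). -/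
open MeasureTheory

/-!
By Archimedes' hat-box theorem the inner product of a uniform point `U` of the unit sphere of `ℝ³`
with a fixed unit vector is uniform on `[-1, 1]`, so `⟪w, U⟫ ^ 2` has distribution function
`min 1 √(x / ‖w‖ ^ 2)`. If the vectors `m j` form a Parseval frame then `∑ j, ⟪m j, U⟫ ^ 2 = 1`, and
it remains to find a Parseval frame of `ℝ³` with squared norms `3 * v j / V`. Rotating two vectors
of a Parseval frame into each other keeps it Parseval, preserves the sum of their squared norms and
takes one of these through all values between the two. Starting from an orthonormal basis padded
with zeros, such rotations reach every family of squared norms in `[0, 1]` with sum `3`.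
-/

section Transfer

open Finset

variable {ι : Type*}

lemma exists_transfer {a : ι → ℝ} (ha : ∀ k, a k ∈ Set.Icc 0 1) {i j : ι} (hij : i ≠ j)
    (hi : a i ∈ Set.Ioo 0 1) (hj : a j ∈ Set.Ioo 0 1) :
    ∃ b : ι → ℝ, (∀ k, b k ∈ Set.Icc 0 1) ∧ b i ≤ a i ∧ a j ≤ b j ∧ b i + b j = a i + a j ∧
      (∀ k, k ≠ i → k ≠ j → b k = a k) ∧
      {k | b k ∈ Set.Ioo 0 1} ⊂ {k | a k ∈ Set.Ioo 0 1} := by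
  classical
  -- The largest transfer from `i` to `j` within `[0, 1]`; it turns one of the two entries into an
  -- endpoint.
  let t := min (a i) (1 - a j)
  have ht0 : 0 ≤ t := le_min hi.1.le (sub_nonneg.2 hj.2.le)
  have hti : t ≤ a i := min_le_left _ _
  have htj : t ≤ 1 - a j := min_le_right _ _
  have ht : t = a i ∨ t = 1 - a j := min_choice _ _
  obtain ⟨b, hbi, hbj, hb⟩ : ∃ b : ι → ℝ, b i = a i - t ∧ b j = a j + t ∧
      ∀ k, k ≠ i → k ≠ j → b k = a k :=
    ⟨Function.update (Function.update a i (a i - t)) j (a j + t), by simp [hij], by simp,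
      fun k hki hkj => by simp [hki, hkj]⟩
  refine ⟨b, fun k => ?_, by linarith, by linarith, by linarith, hb,
    (Set.ssubset_iff_of_subset fun k hk => ?_).2 ?_⟩
  · by_cases hki : k = i
    · exact hki ▸ ⟨by linarith, by linarith [hi.2]⟩
    by_cases hkj : k = j
    · exact hkj ▸ ⟨by linarith [hj.1], by linarith⟩
    · exact hb k hki hkj ▸ ha k
  · by_cases hki : k = i
    · exact hki ▸ hi
    by_cases hkj : k = j
    · exact hkj ▸ hj
    · rwa [Set.mem_ofPred_eq, hb k hki hkj] at hk
  · rcases ht with ht | ht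
    · exact ⟨i, hi, fun hbi' => by linarith [hbi'.1]⟩
    · exact ⟨j, hj, fun hbj' => by linarith [hbj'.2]⟩

variable [Fintype ι]

lemma sum_eq_sum_of_add_eq_add {M : Type*} [AddCommMonoid M] {f g : ι → M} {i j : ι} (hij : i ≠ j)
    (hadd : f i + f j = g i + g j) (hrest : ∀ k, k ≠ i → k ≠ j → f k = g k) :
    ∑ k, f k = ∑ k, g k := by
  classical
  have hpair : ∑ k ∈ {i, j}, f k = ∑ k ∈ {i, j}, g k := by rwa [sum_pair hij, sum_pair hij]
  rw [← sum_add_sum_compl {i, j} f, ← sum_add_sum_compl {i, j} g, hpair]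
  congr 1
  refine sum_congr rfl fun k hk => ?_
  obtain ⟨hki, hkj⟩ : k ≠ i ∧ k ≠ j := by simpa using hk
  exact hrest k hki hkj

lemma exists_ne_mem_Ioo_of_sum_eq_natCast {a : ι → ℝ} (ha : ∀ k, a k ∈ Set.Icc 0 1) {d : ℕ}
    (hsum : ∑ k, a k = d) {i : ι} (hi : a i ∈ Set.Ioo 0 1) : ∃ j ≠ i, a j ∈ Set.Ioo 0 1 := by
  classical
  by_contra! h
  have hint : ∀ k ∈ univ.erase i, a k ∈ (Int.castAddHom ℝ).range := fun k hk => by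
    rcases (ha k).1.eq_or_lt with h0 | h0
    · exact h0 ▸ zero_mem _
    rcases (ha k).2.eq_or_lt with h1 | h1
    · exact ⟨1, by simp [h1]⟩
    · exact absurd ⟨h0, h1⟩ (h k (ne_of_mem_erase hk))
  obtain ⟨z, hz⟩ : a i ∈ (Int.castAddHom ℝ).range := by
    rw [eq_sub_of_add_eq (add_sum_erase _ a (mem_univ i)), hsum]
    exact sub_mem ⟨d, by simp⟩ (sum_mem hint)
  have hz0 : 0 < (z : ℝ) := hi.1.trans_eq hz.symm
  have hz1 : (z : ℝ) < 1 := hz.trans_lt hi.2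
  norm_cast at hz0 hz1
  lia

lemma exists_mem_Ioo_pair_of_sum_eq_natCast {a : ι → ℝ} (ha : ∀ k, a k ∈ Set.Icc 0 1) {d : ℕ}
    (hsum : ∑ k, a k = d) (hfrac : ∃ k, a k ∈ Set.Ioo 0 1) :
    ∃ i j, i ≠ j ∧ a i ∈ Set.Ioo 0 1 ∧ a j ∈ Set.Ioo 0 1 ∧ a i ≤ a j := by
  obtain ⟨i, hi⟩ := hfrac
  obtain ⟨j, hji, hj⟩ := exists_ne_mem_Ioo_of_sum_eq_natCast ha hsum hi
  rcases le_total (a i) (a j) with hle | hle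
  · exact ⟨i, j, hji.symm, hi, hj, hle⟩
  · exact ⟨j, i, hji, hj, hi, hle⟩

end Transfer

section ParsevalFrame

open Finset Module

variable {𝕜 E ι : Type*} [RCLike 𝕜] [NormedAddCommGroup E] [InnerProductSpace 𝕜 E]

variable (𝕜) in
lemma norm_sq_rotation_add (p q : E) (θ : ℝ) :
    ‖(Real.cos θ : 𝕜) • p + (Real.sin θ : 𝕜) • q‖ ^ 2
      + ‖(Real.cos θ : 𝕜) • q - (Real.sin θ : 𝕜) • p‖ ^ 2 = ‖p‖ ^ 2 + ‖q‖ ^ 2 := by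
  have hcross : RCLike.re (inner 𝕜 ((Real.cos θ : 𝕜) • p) ((Real.sin θ : 𝕜) • q)) =
      RCLike.re (inner 𝕜 ((Real.cos θ : 𝕜) • q) ((Real.sin θ : 𝕜) • p)) := by
    simp only [inner_smul_left, inner_smul_right, RCLike.conj_ofReal, RCLike.re_ofReal_mul,
      inner_re_symm (𝕜 := 𝕜) p q]
  rw [norm_add_sq (𝕜 := 𝕜), norm_sub_sq (𝕜 := 𝕜), hcross]
  simp only [norm_smul, mul_pow, RCLike.norm_ofReal, sq_abs]
  linear_combination (‖p‖ ^ 2 + ‖q‖ ^ 2) * Real.sin_sq_add_cos_sq θ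

variable (𝕜) in
lemma norm_inner_sq_rotation_add (p q x : E) (θ : ℝ) :
    ‖inner 𝕜 ((Real.cos θ : 𝕜) • p + (Real.sin θ : 𝕜) • q) x‖ ^ 2
      + ‖inner 𝕜 ((Real.cos θ : 𝕜) • q - (Real.sin θ : 𝕜) • p) x‖ ^ 2
      = ‖inner 𝕜 p x‖ ^ 2 + ‖inner 𝕜 q x‖ ^ 2 := by
  simpa only [inner_add_left, inner_sub_left, inner_smul_left, RCLike.conj_ofReal, smul_eq_mul]
    using norm_sq_rotation_add 𝕜 (inner 𝕜 p x) (inner 𝕜 q x) θ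

variable (𝕜) in
lemma exists_norm_sq_rotation_eq (p q : E) {t : ℝ} (ht : t ∈ Set.uIcc (‖p‖ ^ 2) (‖q‖ ^ 2)) :
    ∃ θ : ℝ, ‖(Real.cos θ : 𝕜) • p + (Real.sin θ : 𝕜) • q‖ ^ 2 = t := by
  have hcont : ContinuousOn
      (fun θ : ℝ => ‖(Real.cos θ : 𝕜) • p + (Real.sin θ : 𝕜) • q‖ ^ 2)
      (Set.uIcc 0 (Real.pi / 2)) := by fun_prop
  obtain ⟨θ, -, hθ⟩ := intermediate_value_uIcc hcont (by simpa using ht)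
  exact ⟨θ, hθ⟩

variable [Fintype ι]

variable (𝕜) in
/-- A finite Parseval frame `m`, i.e. one whose frame coefficients of every `x` have squared moduli
summing to `‖x‖ ^ 2`. For `E = ℝ³` these are the rows of the matrices with orthonormal columns. -/
def IsParsevalFrame (m : ι → E) : Prop :=
  ∀ x, ∑ j, ‖inner 𝕜 (m j) x‖ ^ 2 = ‖x‖ ^ 2

lemma IsParsevalFrame.exists_norm_sq_eq_of_mem_uIcc {m : ι → E} (hm : IsParsevalFrame 𝕜 m)
    {i j : ι} (hij : i ≠ j) {t : ℝ} (ht : t ∈ Set.uIcc (‖m i‖ ^ 2) (‖m j‖ ^ 2)) :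
    ∃ m' : ι → E, IsParsevalFrame 𝕜 m' ∧ ‖m' i‖ ^ 2 = t ∧
      ‖m' i‖ ^ 2 + ‖m' j‖ ^ 2 = ‖m i‖ ^ 2 + ‖m j‖ ^ 2 ∧ ∀ k, k ≠ i → k ≠ j → m' k = m k := by
  classical
  obtain ⟨θ, hθ⟩ := exists_norm_sq_rotation_eq 𝕜 (m i) (m j) ht
  obtain ⟨m', hi, hj, hrest⟩ : ∃ m' : ι → E,
      m' i = (Real.cos θ : 𝕜) • m i + (Real.sin θ : 𝕜) • m j ∧
      m' j = (Real.cos θ : 𝕜) • m j - (Real.sin θ : 𝕜) • m i ∧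
      ∀ k, k ≠ i → k ≠ j → m' k = m k :=
    ⟨Function.update (Function.update m i ((Real.cos θ : 𝕜) • m i + (Real.sin θ : 𝕜) • m j)) j
        ((Real.cos θ : 𝕜) • m j - (Real.sin θ : 𝕜) • m i),
      by simp [hij], by simp, fun k hki hkj => by simp [hki, hkj]⟩
  refine ⟨m', fun x => ?_, by rw [hi, hθ], by rw [hi, hj, norm_sq_rotation_add], hrest⟩
  rw [← hm x]
  exact sum_eq_sum_of_add_eq_add hij (by rw [hi, hj, norm_inner_sq_rotation_add])
    fun k hki hkj => by rw [hrest k hki hkj]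

variable [FiniteDimensional 𝕜 E]

lemma exists_isParsevalFrame_norm_sq_eq_of_eq_zero_or_one {a : ι → ℝ}
    (ha : ∀ k, a k = 0 ∨ a k = 1) (hsum : ∑ k, a k = finrank 𝕜 E) :
    ∃ m : ι → E, IsParsevalFrame 𝕜 m ∧ ∀ k, ‖m k‖ ^ 2 = a k := by
  classical
  have ha' : a = fun k => if a k = 1 then 1 else 0 := by
    funext k
    rcases ha k with h | h <;> simp [h]
  have hcard : Fintype.card {k // a k = 1} = finrank 𝕜 E := by
    rw [ha', sum_boole] at hsum
    rw [Fintype.card_subtype]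
    exact_mod_cast hsum
  let b : OrthonormalBasis {k // a k = 1} 𝕜 E :=
    (stdOrthonormalBasis 𝕜 E).reindex (Fintype.equivFinOfCardEq hcard).symm
  refine ⟨fun k => if h : a k = 1 then b ⟨k, h⟩ else 0, fun x => ?_, fun k => ?_⟩
  · rw [← b.sum_sq_norm_inner_right x]
    refine (Fintype.sum_of_injective _ Subtype.val_injective _ _ (fun k hk => ?_) fun k => ?_).symm
    · have hk1 : a k ≠ 1 := by simpa using hk
      simp [hk1]
    · simp [k.2]
  · rcases ha k with h | h <;> simp [h]

lemma exists_isParsevalFrame_norm_sq_eq {a : ι → ℝ} (ha : ∀ k, a k ∈ Set.Icc 0 1)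
    (hsum : ∑ k, a k = finrank 𝕜 E) :
    ∃ m : ι → E, IsParsevalFrame 𝕜 m ∧ ∀ k, ‖m k‖ ^ 2 = a k := by
  induction hs : {k | a k ∈ Set.Ioo 0 1} using WellFoundedLT.induction generalizing a with
  | ind s ih =>
  subst hs
  by_cases hfrac : ∃ k, a k ∈ Set.Ioo 0 1
  · obtain ⟨i, j, hij, hi, hj, hle⟩ := exists_mem_Ioo_pair_of_sum_eq_natCast ha hsum hfrac
    obtain ⟨b, hb, hbi, hbj, hadd, hrest, hlt⟩ := exists_transfer ha hij hi hj
    obtain ⟨m, hm, hmb⟩ :=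
      ih _ hlt hb ((sum_eq_sum_of_add_eq_add hij hadd hrest).trans hsum) rfl
    have hmem : a i ∈ Set.uIcc (‖m i‖ ^ 2) (‖m j‖ ^ 2) := by
      rw [hmb, hmb]
      exact Set.mem_uIcc_of_le hbi (hle.trans hbj)
    obtain ⟨m', hm', hi', hadd', hrest'⟩ := hm.exists_norm_sq_eq_of_mem_uIcc hij hmem
    refine ⟨m', hm', fun k => ?_⟩
    rcases eq_or_ne k i with rfl | hki
    · exact hi'
    rcases eq_or_ne k j with rfl | hkj
    · rw [hmb, hmb] at hadd'
      linarith
    · rw [hrest' k hki hkj, hmb, hrest k hki hkj]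
  · refine exists_isParsevalFrame_norm_sq_eq_of_eq_zero_or_one (fun k => ?_) hsum
    by_contra! h
    exact hfrac ⟨k, (ha k).1.lt_of_ne' h.1, (ha k).2.lt_of_ne h.2⟩

end ParsevalFrame

section Archimedes

open Metric Module

section Product

variable {F : Type*} [NormedAddCommGroup F] [InnerProductSpace ℝ F] [FiniteDimensional ℝ F]
  [MeasurableSpace F] [BorelSpace F]

lemma volume_norm_sq_lt (hF : finrank ℝ F = 2) (r : ℝ) :
    volume {w : F | ‖w‖ ^ 2 < r} = ENNReal.ofReal r * volume (ball (0 : F) 1) := by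
  have : Nontrivial F := nontrivial_of_finrank_pos (R := ℝ) (by lia)
  rcases le_total r 0 with hr | hr
  · have hempty : {w : F | ‖w‖ ^ 2 < r} = ∅ :=
      Set.eq_empty_of_forall_notMem fun w hw => (hw.trans_le hr).not_ge (sq_nonneg _)
    rw [hempty, measure_empty, ENNReal.ofReal_of_nonpos hr, zero_mul]
  · have hball : {w : F | ‖w‖ ^ 2 < r} = ball 0 √r := by
      ext w
      simp [Real.lt_sqrt (norm_nonneg w)]
    rw [hball, Measure.addHaar_ball _ _ (Real.sqrt_nonneg r), hF, Real.sq_sqrt hr]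

lemma volume_annulus (hF : finrank ℝ F = 2) {r R : ℝ} (hr : 0 ≤ r) :
    volume {w : F | r ≤ ‖w‖ ^ 2 ∧ ‖w‖ ^ 2 < R} =
      ENNReal.ofReal (R - r) * volume (ball (0 : F) 1) := by
  rcases le_total r R with hrR | hRr
  · have hsdiff : {w : F | r ≤ ‖w‖ ^ 2 ∧ ‖w‖ ^ 2 < R} =
        {w | ‖w‖ ^ 2 < R} \ {w | ‖w‖ ^ 2 < r} := by
      ext w
      simp [and_comm]
    have hsub : {w : F | ‖w‖ ^ 2 < r} ⊆ {w | ‖w‖ ^ 2 < R} := fun w hw => lt_of_lt_of_le hw hrR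
    rw [hsdiff, measure_sdiff hsub
      (measurableSet_lt (by fun_prop) (by fun_prop)).nullMeasurableSet
      (by rw [volume_norm_sq_lt hF]; finiteness), volume_norm_sq_lt hF, volume_norm_sq_lt hF,
      ENNReal.ofReal_sub _ hr, ENNReal.sub_mul fun _ _ => measure_ball_lt_top.ne]
  · have hempty : {w : F | r ≤ ‖w‖ ^ 2 ∧ ‖w‖ ^ 2 < R} = ∅ :=
      Set.eq_empty_of_forall_notMem fun w hw => (hw.1.trans_lt hw.2).not_ge hRr
    rw [hempty, measure_empty, ENNReal.ofReal_of_nonpos (sub_nonpos.2 hRr), zero_mul]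

-- The slice at height `z` is an annulus with the area of the slice of the ball at height `z / s`.
lemma volume_prod_ball_inter_cone (hF : finrank ℝ F = 2) {s : ℝ} (hs0 : 0 < s) (hs1 : s ≤ 1) :
    volume ({p : ℝ × F | p.1 ^ 2 + ‖p.2‖ ^ 2 < 1} ∩
      {p | p.1 ^ 2 ≤ s ^ 2 * (p.1 ^ 2 + ‖p.2‖ ^ 2)}) =
      ENNReal.ofReal s * volume {p : ℝ × F | p.1 ^ 2 + ‖p.2‖ ^ 2 < 1} := by
  have hball (z : ℝ) : volume (Prod.mk z ⁻¹' {p : ℝ × F | p.1 ^ 2 + ‖p.2‖ ^ 2 < 1}) =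
      ENNReal.ofReal (1 - z ^ 2) * volume (ball (0 : F) 1) := by
    rw [← volume_norm_sq_lt hF]
    congr 1
    ext w
    simp [lt_sub_iff_add_lt']
  have hcone (z : ℝ) : volume (Prod.mk z ⁻¹' ({p : ℝ × F | p.1 ^ 2 + ‖p.2‖ ^ 2 < 1} ∩
      {p | p.1 ^ 2 ≤ s ^ 2 * (p.1 ^ 2 + ‖p.2‖ ^ 2)})) =
      ENNReal.ofReal (1 - (s⁻¹ * z) ^ 2) * volume (ball (0 : F) 1) := by
    have hnonneg : 0 ≤ (s⁻¹ * z) ^ 2 - z ^ 2 := by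
      rw [mul_pow, sub_nonneg]
      exact le_mul_of_one_le_left (sq_nonneg z) (one_le_pow₀ ((one_le_inv₀ hs0).2 hs1))
    rw [← sub_sub_sub_cancel_right 1 _ (z ^ 2), ← volume_annulus hF hnonneg]
    congr 1
    ext w
    simp only [Set.mem_preimage, Set.mem_inter_iff, Set.mem_ofPred_eq]
    rw [and_comm, sub_le_iff_le_add', lt_sub_iff_add_lt', mul_pow, inv_pow,
      inv_mul_le_iff₀ (by positivity)]
  have hmeas : MeasurableSet {p : ℝ × F | p.1 ^ 2 + ‖p.2‖ ^ 2 < 1} :=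
    measurableSet_lt (by fun_prop) (by fun_prop)
  rw [Measure.volume_eq_prod, Measure.prod_apply hmeas,
    Measure.prod_apply (hmeas.inter (measurableSet_le (by fun_prop) (by fun_prop)))]
  simp only [hball, hcone]
  rw [← lintegral_map (f := fun z : ℝ => ENNReal.ofReal (1 - z ^ 2) * volume (ball (0 : F) 1))
    (by fun_prop) (measurable_const_mul s⁻¹), Real.map_volume_mul_left (inv_ne_zero hs0.ne'),
    lintegral_smul_measure, inv_inv, abs_of_pos hs0, smul_eq_mul]

end Product

variable {E : Type*} [NormedAddCommGroup E] [InnerProductSpace ℝ E]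

lemma exists_linearIsometryEquiv_fst_eq_inner {e : E} (he : ‖e‖ = 1) :
    ∃ φ : E ≃ₗᵢ[ℝ] WithLp 2 (ℝ × (ℝ ∙ e)ᗮ), ∀ x, (φ x).fst = inner ℝ e x := by
  refine ⟨(ℝ ∙ e).orthogonalDecomposition.trans (LinearIsometryEquiv.withLpProdCongr 2
    (LinearIsometryEquiv.toSpanUnitSingleton e he).symm (.refl ℝ _)), fun x => ?_⟩
  change (LinearIsometryEquiv.toSpanUnitSingleton e he).symm
    ((ℝ ∙ e).orthogonalDecomposition x).fst = _
  rw [Submodule.fst_orthogonalDecomposition_apply, LinearIsometryEquiv.symm_apply_eq]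
  ext
  simp [Submodule.starProjection_unit_singleton ℝ he]

variable [FiniteDimensional ℝ E] [MeasurableSpace E] [BorelSpace E]

lemma volume_ball_inter_cone_of_pos_of_le_one (hE : finrank ℝ E = 3) {e : E} (he : ‖e‖ = 1) {s : ℝ}
    (hs0 : 0 < s) (hs1 : s ≤ 1) :
    volume (ball (0 : E) 1 ∩ {x | |inner ℝ e x| ≤ s * ‖x‖}) =
      ENNReal.ofReal s * volume (ball (0 : E) 1) := by
  obtain ⟨φ, hφ⟩ := exists_linearIsometryEquiv_fst_eq_inner he
  have hmp : MeasurePreserving (fun x => WithLp.ofLp (φ x)) (volume : Measure E) volume :=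
    (WithLp.volume_preserving_ofLp ℝ (ℝ ∙ e)ᗮ).comp φ.measurePreserving
  have hnorm (x : E) : ‖x‖ ^ 2 = (φ x).fst ^ 2 + ‖(φ x).snd‖ ^ 2 := by
    rw [← φ.norm_map, WithLp.prod_norm_sq_eq_of_L2, Real.norm_eq_abs, sq_abs]
  have hball : ball (0 : E) 1 = (fun x => WithLp.ofLp (φ x)) ⁻¹'
      {p | p.1 ^ 2 + ‖p.2‖ ^ 2 < 1} := by
    ext x
    rw [mem_ball_zero_iff, ← sq_lt_one_iff₀ (norm_nonneg x), hnorm]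
    rfl
  have hcone : {x | |inner ℝ e x| ≤ s * ‖x‖} = (fun x => WithLp.ofLp (φ x)) ⁻¹'
      {p | p.1 ^ 2 ≤ s ^ 2 * (p.1 ^ 2 + ‖p.2‖ ^ 2)} := by
    ext x
    rw [Set.mem_ofPred_eq, ← sq_le_sq₀ (abs_nonneg _) (by positivity), sq_abs, mul_pow, hnorm,
      ← hφ]
    rfl
  have hmeas : MeasurableSet {p : ℝ × (ℝ ∙ e)ᗮ | p.1 ^ 2 + ‖p.2‖ ^ 2 < 1} :=
    measurableSet_lt (by fun_prop) (by fun_prop)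
  have : Fact (finrank ℝ E = 2 + 1) := ⟨hE⟩
  have he0 : e ≠ 0 := norm_ne_zero_iff.1 (by rw [he]; exact one_ne_zero)
  rw [hball, hcone, ← Set.preimage_inter, hmp.measure_preimage hmeas.nullMeasurableSet,
    hmp.measure_preimage
      (hmeas.inter (measurableSet_le (by fun_prop) (by fun_prop))).nullMeasurableSet,
    volume_prod_ball_inter_cone (Submodule.finrank_orthogonal_span_singleton he0) hs0 hs1]

lemma volume_ball_inter_cone (hE : finrank ℝ E = 3) {e : E} (he : ‖e‖ = 1) {s : ℝ} (hs : 0 ≤ s) :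
    volume (ball (0 : E) 1 ∩ {x | |inner ℝ e x| ≤ s * ‖x‖}) =
      ENNReal.ofReal (min 1 s) * volume (ball (0 : E) 1) := by
  rcases hs.eq_or_lt with rfl | hs0
  · have hproper : (ℝ ∙ e)ᗮ ≠ ⊤ := fun h => by
      have he_mem : e ∈ (ℝ ∙ e)ᗮ := h ▸ Submodule.mem_top
      simp [Submodule.mem_orthogonal_singleton_iff_inner_right, he] at he_mem
    rw [min_eq_right zero_le_one, ENNReal.ofReal_zero, zero_mul]
    refine measure_mono_null (fun x hx => ?_) (Measure.addHaar_submodule volume _ hproper)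
    exact Submodule.mem_orthogonal_singleton_iff_inner_right.2 (by simpa using hx.2)
  rcases le_total s 1 with hs1 | hs1
  · rw [min_eq_right hs1, volume_ball_inter_cone_of_pos_of_le_one hE he hs0 hs1]
  · have huniv : {x | |inner ℝ e x| ≤ s * ‖x‖} = Set.univ :=
      Set.eq_univ_of_forall fun x => (abs_real_inner_le_norm e x).trans (by rw [he]; gcongr)
    rw [min_eq_left hs1, huniv, Set.inter_univ, ENNReal.ofReal_one, one_mul]

end Archimedes

section UniformSphere

open Metric Module ProbabilityTheory
open scoped Pointwise

variable {E : Type*} [NormedAddCommGroup E]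

lemma Ioo_smul_image_sphere_preimage [NormedSpace ℝ E] {C : Set E}
    (hC : ∀ c : ℝ, 0 < c → ∀ x ∈ C, c • x ∈ C) :
    Set.Ioo (0 : ℝ) 1 • ((↑) '' ((↑) ⁻¹' C : Set (sphere (0 : E) 1)) : Set E) =
      (ball 0 1 ∩ C) \ {0} := by
  rw [Subtype.image_preimage_coe]
  ext x
  simp only [Set.mem_smul, Set.mem_sdiff, Set.mem_inter_iff, Set.mem_singleton_iff]
  constructor
  · rintro ⟨r, hr, u, ⟨hu, huC⟩, rfl⟩
    have hu1 : ‖u‖ = 1 := mem_sphere_zero_iff_norm.1 hu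
    refine ⟨⟨?_, hC r hr.1 u huC⟩, smul_ne_zero hr.1.ne' (ne_zero_of_mem_unit_sphere ⟨u, hu⟩)⟩
    simpa [norm_smul, hu1, abs_of_pos hr.1] using hr.2
  · rintro ⟨⟨hx, hxC⟩, hx0⟩
    have hpos : 0 < ‖x‖ := norm_pos_iff.2 hx0
    exact ⟨‖x‖, ⟨hpos, mem_ball_zero_iff.1 hx⟩, ‖x‖⁻¹ • x,
      ⟨by simp [norm_smul, hpos.ne'], hC _ (inv_pos.2 hpos) x hxC⟩, smul_inv_smul₀ hpos.ne' x⟩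

variable [InnerProductSpace ℝ E] [FiniteDimensional ℝ E] [MeasurableSpace E] [BorelSpace E]

variable (E) in
/-- The uniform probability measure on the unit sphere of `E`, encoded as the surface measure
`Measure.toSphere` divided by its total mass; it is the law of the random direction `U`. -/
noncomputable def uniformSphere : Measure (sphere (0 : E) 1) :=
  cond (volume : Measure E).toSphere Set.univ

instance [Nontrivial E] : IsProbabilityMeasure (uniformSphere E) :=
  cond_isProbabilityMeasure (Measure.measure_univ_ne_zero.2 (Measure.toSphere_ne_zero _))

lemma uniformSphere_preimage_coe [Nontrivial E] {C : Set E} (hmeas : MeasurableSet C)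
    (hC : ∀ c : ℝ, 0 < c → ∀ x ∈ C, c • x ∈ C) :
    uniformSphere E ((↑) ⁻¹' C) = cond volume (ball (0 : E) 1) C := by
  have hdim : (finrank ℝ E : ENNReal) ≠ 0 := by exact_mod_cast finrank_pos.ne'
  rw [uniformSphere, cond_apply .univ, Set.univ_inter, Measure.toSphere_apply_univ,
    Measure.toSphere_apply' _ (measurable_subtype_coe hmeas), Ioo_smul_image_sphere_preimage hC,
    measure_sdiff_null (measure_singleton 0), cond_apply isOpen_ball.measurableSet,
    ENNReal.mul_inv (.inl hdim) (.inl (ENNReal.natCast_ne_top _)), mul_mul_mul_comm,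
    ENNReal.inv_mul_cancel hdim (ENNReal.natCast_ne_top _), one_mul]

lemma uniformSphere_abs_inner_le (hE : finrank ℝ E = 3) {e : E} (he : ‖e‖ = 1) {s : ℝ}
    (hs : 0 ≤ s) :
    uniformSphere E {u | |inner ℝ e (u : E)| ≤ s} = ENNReal.ofReal (min 1 s) := by
  have : Nontrivial E := nontrivial_of_finrank_pos (R := ℝ) (by lia)
  have hcone : {u : sphere (0 : E) 1 | |inner ℝ e (u : E)| ≤ s} =
      (↑) ⁻¹' {x : E | |inner ℝ e x| ≤ s * ‖x‖} := by
    ext u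
    simp
  rw [hcone, uniformSphere_preimage_coe (measurableSet_le (by fun_prop) (by fun_prop)) ?_,
    cond_apply isOpen_ball.measurableSet, volume_ball_inter_cone hE he hs, mul_left_comm,
    ENNReal.inv_mul_cancel (measure_ball_pos _ _ one_pos).ne' measure_ball_lt_top.ne, mul_one]
  intro c hc x hx
  have hx : |inner ℝ e x| ≤ s * ‖x‖ := hx
  simpa [inner_smul_right, norm_smul, abs_mul, abs_of_pos hc, mul_left_comm s] using
    mul_le_mul_of_nonneg_left hx hc.le

lemma uniformSphere_inner_sq_le (hE : finrank ℝ E = 3) {w : E} (hw : w ≠ 0) {x : ℝ}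
    (hx : 0 ≤ x) :
    uniformSphere E {u | inner ℝ w (u : E) ^ 2 ≤ x} =
      ENNReal.ofReal (min 1 √(x / ‖w‖ ^ 2)) := by
  have hw_sq : 0 < ‖w‖ ^ 2 := sq_pos_of_pos (norm_pos_iff.2 hw)
  rw [← uniformSphere_abs_inner_le hE (norm_smul_inv_norm (𝕜 := ℝ) hw) (Real.sqrt_nonneg _)]
  congr 1
  ext u
  rw [Set.mem_ofPred_eq, Set.mem_ofPred_eq, ← sq_le_sq₀ (abs_nonneg _) (Real.sqrt_nonneg _),
    sq_abs, Real.sq_sqrt (div_nonneg hx hw_sq.le), real_inner_smul_left, mul_pow, inv_pow,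
    inv_mul_eq_div]
  exact (div_le_div_iff_of_pos_right hw_sq).symm

end UniformSphere

section Coupling

variable {ι : Type*} [Fintype ι]

lemma exists_coupling_of_sum_eq_three {a : ι → ℝ} (ha0 : ∀ j, 0 < a j) (ha1 : ∀ j, a j ≤ 1)
    (hsum : ∑ j, a j = 3) :
    ∃ μ : Measure (ι → ℝ), IsProbabilityMeasure μ ∧
      (∀ᵐ A ∂μ, (∀ j, 0 ≤ A j) ∧ ∑ j, A j = 1) ∧
      (∀ j, ∀ x : ℝ, 0 ≤ x →
        μ {A : ι → ℝ | A j ≤ x} = ENNReal.ofReal (min 1 √(x / a j))) := by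
  obtain ⟨m, hm, hnorm⟩ := exists_isParsevalFrame_norm_sq_eq (𝕜 := ℝ)
    (E := EuclideanSpace ℝ (Fin 3)) (fun j => ⟨(ha0 j).le, ha1 j⟩) (by simpa using hsum)
  let A : Metric.sphere (0 : EuclideanSpace ℝ (Fin 3)) 1 → ι → ℝ :=
    fun u j => inner ℝ (m j) (u : EuclideanSpace ℝ (Fin 3)) ^ 2
  have hA : Measurable A := by fun_prop
  refine ⟨(uniformSphere _).map A, Measure.isProbabilityMeasure_map hA.aemeasurable, ?_,
    fun j x hx => ?_⟩
  · rw [ae_map_iff hA.aemeasurable (by measurability)]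
    exact .of_forall fun u => ⟨fun j => sq_nonneg _, by simpa using hm u⟩
  · have hmj : m j ≠ 0 := fun h => (ha0 j).ne (by simp [← hnorm j, h])
    rw [Measure.map_apply hA (measurableSet_le (measurable_pi_apply j) measurable_const), ← hnorm j]
    exact uniformSphere_inner_sq_le (by simp) hmj hx

theorem stmt4_general [Nonempty ι] (v : ι → ℝ) (hv : ∀ j, 0 < v j)
    (hbound : ∀ j, v j ≤ (∑ l, v l) / 3) :
    ∃ μ : Measure (ι → ℝ), IsProbabilityMeasure μ ∧
      (∀ᵐ A ∂μ, (∀ j, 0 ≤ A j) ∧ ∑ j, A j = 1) ∧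
      (∀ j, ∀ x : ℝ, 0 ≤ x →
        μ {A : ι → ℝ | A j ≤ x} =
          ENNReal.ofReal (min 1 (Real.sqrt ((∑ l, v l) * x / (3 * v j))))) := by
  have hV : 0 < ∑ l, v l := Finset.sum_pos (fun j _ => hv j) Finset.univ_nonempty
  have hsum : ∑ j, 3 * v j / ∑ l, v l = 3 := by
    rw [← Finset.sum_div, ← Finset.mul_sum, mul_div_cancel_right₀ _ hV.ne']
  simpa only [div_div_eq_mul_div, mul_comm] using exists_coupling_of_sum_eq_three
    (fun j => div_pos (mul_pos three_pos (hv j)) hV)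
    (fun j => by rw [div_le_one hV]; linarith [hbound j]) hsum

end Coupling

theorem stmt4 (n : ℕ) (hn : 3 ≤ n) (v : Fin n → ℝ) (hv : ∀ j, 0 < v j)
    (hbound : ∀ j, v j ≤ (∑ l, v l) / 3) :
    ∃ μ : Measure (Fin n → ℝ), IsProbabilityMeasure μ ∧
      (∀ᵐ A ∂μ, (∀ j, 0 ≤ A j) ∧ ∑ j, A j = 1) ∧
      (∀ j, ∀ x : ℝ, 0 ≤ x →
        μ {A : Fin n → ℝ | A j ≤ x} =
          ENNReal.ofReal (min 1 (Real.sqrt ((∑ l, v l) * x / (3 * v j))))) := by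
  have : Nonempty (Fin n) := ⟨⟨0, by lia⟩⟩
  exact stmt4_general v hv hbound
end

section
/- Let k ≥ 3 be an integer, let v_1 ≥ v_2 ≥ … ≥ v_n > 0, and let B be an integer with 0 ≤ B ≤ n, and set p*_j = m_{v_j}^{-1}(x*) for j ∈ [n]. Let μ be a probability measure on {0,1}^n such that μ-almost surely Σ_{j=1}^n A_j ≤ B and, for each j ∈ [n], μ{A : A_j = 1} = p*_j. Then independent play of μ by all k players is a Nash equilibrium of the Boolean-valued Colonel Blotto game: for every probability measure ν on {0,1}^n that almost surely satisfies Σ_{j=1}^n A_j ≤ B, the expected Boolean Blotto payoff of a single player drawing her bid vector from ν while the other k−1 players draw independently from μ is at most the expected payoff she receives by drawing from μ. -/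
open MeasureTheory

/-- Marginal utility `m_v(p)` of competing in a battlefield of value `v` in the
`k`-player Boolean General Lotto game, when each of the other `k−1` players
independently competes with probability `p`. -/
noncomputable def mMarg (k : ℕ) (v p : ℝ) : ℝ :=
  if p = 0 then ((k : ℝ) - 1) * v / k else (v / k) * ((1 - (1 - p) ^ (k - 1)) / p)

/-- Boolean Colonel Blotto payoff: each battlefield's value is split evenly
among the players who bid the most (`false < true`) on it. -/
noncomputable def boolBlottoPayoff {k n : ℕ} (v : Fin n → ℝ) (A : Fin k → Fin n → Bool)
    (i : Fin k) : ℝ :=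
  ∑ j, if ∀ i', A i' j ≤ A i j then
      v j / ((Finset.univ.filter fun i' : Fin k => ∀ i'', A i'' j ≤ A i' j).card : ℝ)
    else 0

/-- Expected payoff of player `i` when each player `i'` independently samples its
Boolean bid vector from `P i'`. -/
noncomputable def boolExpectedPayoff {k n : ℕ} (v : Fin n → ℝ)
    (P : Fin k → Measure (Fin n → Bool)) (hP : ∀ i, IsProbabilityMeasure (P i))
    (i : Fin k) : ℝ :=
  haveI := hP
  ∫ A, boolBlottoPayoff v A i ∂(Measure.pi P)

/-!
A player's payoff is a sum over battlefields, and on each battlefield only the probabilities with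
which the players bid there matter. If all rivals bid with probability `p`, the payoff is affine in
the probability `q` with which the player herself bids, and its slope is `m_v(p)`: abstaining earns
`(v / k) (1 - p)^(k - 1)`, while at `q = p` symmetry among the `k` players forces the payoff
`v / k`, so the slope is read off from these two values.

Deviating from `p*` to marginals `q` therefore gains `∑ j, (q j - p* j) m_{v j}(p* j)`. The number
`x*` is a Lagrange multiplier for the budget: `p* j` maximizes `q ↦ q (m_{v j}(p* j) - x*)` on
`[0, 1]`, so the gain is at most `x* (∑ j, q j - ∑ j, p* j)`. This is nonpositive since `0 ≤ x*` and
`p*` exhausts the budget.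
-/

open Function Set

section BernoulliMean

variable {ι : Type*} [Fintype ι]

/-- The mass function of a bid that is `true` with probability `p`. -/
def bernoulliWeight (p : ℝ) (b : Bool) : ℝ := if b then p else 1 - p

/-- The expectation of `f` under independent bids, where the bid of `i` is `true` with probability
`q i`. It is a polynomial in `q`, defined for all real `q`. -/
def bernoulliMean [DecidableEq ι] (q : ι → ℝ) (f : (ι → Bool) → ℝ) : ℝ :=
  ∑ c : ι → Bool, (∏ i, bernoulliWeight (q i) (c i)) * f c

theorem prod_bernoulliWeight_update [DecidableEq ι] (q : ι → ℝ) (i : ι) (t : ℝ) (c : ι → Bool) :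
    ∏ i', bernoulliWeight (update q i t i') (c i') =
      bernoulliWeight t (c i) * ∏ i' ∈ Finset.univ.erase i, bernoulliWeight (q i') (c i') := by
  rw [← Finset.mul_prod_erase _ _ (Finset.mem_univ i), update_self]
  congr 1
  exact Finset.prod_congr rfl fun i' hi' => by rw [update_of_ne (Finset.ne_of_mem_erase hi')]

variable [DecidableEq ι]

theorem bernoulliMean_const (q : ι → ℝ) (a : ℝ) : bernoulliMean q (fun _ => a) = a := by
  rw [bernoulliMean, ← Finset.sum_mul, ← Fintype.piFinset_univ, ← Finset.prod_univ_sum]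
  simp [bernoulliWeight]

theorem bernoulliMean_sum {κ : Type*} (s : Finset κ) (q : ι → ℝ) (f : κ → (ι → Bool) → ℝ) :
    bernoulliMean q (fun c => ∑ j ∈ s, f j c) = ∑ j ∈ s, bernoulliMean q (f j) := by
  simp only [bernoulliMean, Finset.mul_sum]
  exact Finset.sum_comm

theorem bernoulliMean_comp_perm (σ : Equiv.Perm ι) (q : ι → ℝ) (f : (ι → Bool) → ℝ) :
    bernoulliMean (q ∘ σ) f = bernoulliMean q (fun c => f (c ∘ σ)) := by
  refine Fintype.sum_equiv (σ.arrowCongr (Equiv.refl Bool)) _ _ fun c => ?_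
  congr 1
  · exact Fintype.prod_equiv σ _ _ fun i => by simp [Equiv.arrowCongr]
  · congr 1
    ext i
    simp [Equiv.arrowCongr]

theorem bernoulliMean_update (q : ι → ℝ) (i : ι) (t : ℝ) (f : (ι → Bool) → ℝ) :
    bernoulliMean (update q i t) f =
      t * bernoulliMean (update q i 1) f + (1 - t) * bernoulliMean (update q i 0) f := by
  simp_rw [bernoulliMean, prod_bernoulliWeight_update, Finset.mul_sum, ← Finset.sum_add_distrib]
  refine Finset.sum_congr rfl fun c _ => ?_
  cases c i <;> simp only [bernoulliWeight, if_true, Bool.false_eq_true, if_false] <;> ring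

theorem continuous_bernoulliMean (f : (ι → Bool) → ℝ) :
    Continuous fun q : ι → ℝ => bernoulliMean q f := by
  have hweight (b : Bool) : Continuous fun p => bernoulliWeight p b := by
    cases b <;> simp only [bernoulliWeight, if_true, Bool.false_eq_true, if_false] <;> fun_prop
  unfold bernoulliMean
  fun_prop

end BernoulliMean

section MarginalUtility

variable {k : ℕ}

theorem mMarg_eq_geom_sum (hk : 1 ≤ k) (v p : ℝ) :
    mMarg k v p = v / k * ∑ i ∈ Finset.range (k - 1), (1 - p) ^ i := by
  unfold mMarg
  split_ifs with hp
  · simp only [hp, sub_zero, one_pow, Finset.sum_const, Finset.card_range, nsmul_eq_mul, mul_one,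
      Nat.cast_sub hk, Nat.cast_one]
    ring
  · congr 1
    rw [div_eq_iff hp]
    linarith [geom_sum_mul (1 - p) (k - 1)]

theorem mMarg_zero (k : ℕ) (v : ℝ) : mMarg k v 0 = ((k : ℝ) - 1) * v / k :=
  if_pos rfl

theorem mMarg_one (hk : 2 ≤ k) (v : ℝ) : mMarg k v 1 = v / k := by
  have : k - 1 ≠ 0 := by lia
  simp [mMarg, this]

theorem continuous_mMarg (hk : 1 ≤ k) (v : ℝ) : Continuous (mMarg k v) := by
  rw [funext (mMarg_eq_geom_sum hk v)]
  fun_prop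

theorem antitoneOn_mMarg (hk : 1 ≤ k) {v : ℝ} (hv : 0 ≤ v) :
    AntitoneOn (mMarg k v) (Iic 1) := by
  intro p _ q hq hpq
  rw [mMarg_eq_geom_sum hk, mMarg_eq_geom_sum hk]
  have : 0 ≤ 1 - q := sub_nonneg.mpr hq
  gcongr

end MarginalUtility

section BattlefieldPayoff

variable {ι : Type*} [Fintype ι]

/-- The payoff of player `i` on a single battlefield of value `v` on which the bids are `c`. -/
noncomputable def battlefieldPayoff (v : ℝ) (c : ι → Bool) (i : ι) : ℝ :=
  if ∀ i', c i' ≤ c i then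
    v / ((Finset.univ.filter fun i' : ι => ∀ i'', c i'' ≤ c i').card : ℝ)
  else 0

theorem sum_battlefieldPayoff [Nonempty ι] (v : ℝ) (c : ι → Bool) :
    ∑ i, battlefieldPayoff v c i = v := by
  obtain ⟨i, hi⟩ := Finite.exists_max c
  have hcard : (Finset.univ.filter fun i' : ι => ∀ i'', c i'' ≤ c i').card ≠ 0 :=
    Finset.card_ne_zero_of_mem (a := i) (by simpa using hi)
  simp only [battlefieldPayoff]
  rw [← Finset.sum_filter, Finset.sum_const, nsmul_eq_mul, mul_div_cancel₀]
  exact_mod_cast hcard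

theorem battlefieldPayoff_comp_perm (v : ℝ) (c : ι → Bool) (σ : Equiv.Perm ι) (i : ι) :
    battlefieldPayoff v (c ∘ σ) i = battlefieldPayoff v c (σ i) := by
  have hmax (b : Bool) : (∀ i', c (σ i') ≤ b) ↔ ∀ i', c i' ≤ b :=
    σ.forall_congr_right (q := fun i' => c i' ≤ b)
  have hcard : (Finset.univ.filter fun i' => ∀ i'', c i'' ≤ c (σ i')).card =
      (Finset.univ.filter fun i' => ∀ i'', c i'' ≤ c i').card :=
    Finset.card_equiv σ (by simp)
  simp only [battlefieldPayoff, comp_apply, hmax, hcard]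

theorem battlefieldPayoff_false (v : ℝ) (i : ι) :
    battlefieldPayoff v (fun _ => false) i = v / Fintype.card ι := by
  simp [battlefieldPayoff]

theorem battlefieldPayoff_of_lt (v : ℝ) {c : ι → Bool} {i i' : ι} (h : c i < c i') :
    battlefieldPayoff v c i = 0 :=
  if_neg fun hi => (hi i').not_gt h

variable [DecidableEq ι]

theorem bernoulliMean_battlefieldPayoff_const (v p : ℝ) (i : ι) :
    bernoulliMean (fun _ => p) (battlefieldPayoff v · i) = v / Fintype.card ι := by
  have : Nonempty ι := ⟨i⟩
  have hsymm (i' : ι) : bernoulliMean (fun _ => p) (battlefieldPayoff v · i') =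
      bernoulliMean (fun _ => p) (battlefieldPayoff v · i) := by
    have hswap := bernoulliMean_comp_perm (Equiv.swap i i') (fun _ => p) (battlefieldPayoff v · i)
    simp only [battlefieldPayoff_comp_perm, Equiv.swap_apply_left] at hswap
    exact hswap.symm
  rw [eq_div_iff (Nat.cast_ne_zero.mpr Fintype.card_ne_zero)]
  symm
  calc v = bernoulliMean (fun _ => p) fun c : ι → Bool => ∑ i', battlefieldPayoff v c i' := by
        simp only [sum_battlefieldPayoff, bernoulliMean_const]
    _ = ∑ i', bernoulliMean (fun _ => p) (battlefieldPayoff v · i') := bernoulliMean_sum _ _ _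
    _ = bernoulliMean (fun _ => p) (battlefieldPayoff v · i) * Fintype.card ι := by
        simp only [hsymm, Finset.sum_const, Finset.card_univ, nsmul_eq_mul, mul_comm]

theorem bernoulliMean_battlefieldPayoff_update_zero (v p : ℝ) (i : ι) :
    bernoulliMean (update (fun _ => p) i 0) (battlefieldPayoff v · i) =
      v / Fintype.card ι * (1 - p) ^ (Fintype.card ι - 1) := by
  simp_rw [bernoulliMean, prod_bernoulliWeight_update]
  rw [Fintype.sum_eq_single fun _ => false]
  · simp [bernoulliWeight, battlefieldPayoff_false, Finset.card_erase_of_mem, mul_comm]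
  · intro c hc
    obtain ⟨i', hi'⟩ : ∃ i', c i' = true := by simpa using Function.ne_iff.mp hc
    cases hi : c i
    · rw [battlefieldPayoff_of_lt v (i' := i') (by rw [hi, hi']; decide), mul_zero]
    · simp [bernoulliWeight]

theorem bernoulliMean_battlefieldPayoff_update_one_sub_update_zero (v p : ℝ) (i : ι) :
    bernoulliMean (update (fun _ => p) i 1) (battlefieldPayoff v · i) -
      bernoulliMean (update (fun _ => p) i 0) (battlefieldPayoff v · i) =
        mMarg (Fintype.card ι) v p := by
  have hcard : 1 ≤ Fintype.card ι := Fintype.card_pos_iff.mpr ⟨i⟩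
  -- At `p = 0` the affine relation says nothing about bidding, so that case is taken by continuity.
  have hcont (t : ℝ) : Continuous fun p : ℝ =>
      bernoulliMean (update (fun _ => p) i t) (battlefieldPayoff v · i) :=
    (continuous_bernoulliMean _).comp (by fun_prop)
  refine congrFun (Continuous.ext_on (dense_compl_singleton 0) ((hcont 1).sub (hcont 0))
    (continuous_mMarg hcard v) fun p (hp : p ≠ 0) => ?_) p
  have haffine := bernoulliMean_update (fun _ => p) i p (battlefieldPayoff v · i)
  rw [update_eq_self i fun _ => p, bernoulliMean_battlefieldPayoff_const] at haffine
  have habstain := bernoulliMean_battlefieldPayoff_update_zero v p i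
  rw [Pi.sub_apply, mMarg, if_neg hp, ← mul_div_assoc, eq_div_iff hp]
  linear_combination -haffine - habstain

theorem bernoulliMean_battlefieldPayoff_update_sub (v p q : ℝ) (i : ι) :
    bernoulliMean (update (fun _ => p) i q) (battlefieldPayoff v · i) -
      bernoulliMean (fun _ => p) (battlefieldPayoff v · i) =
        (q - p) * mMarg (Fintype.card ι) v p := by
  have hp := bernoulliMean_update (fun _ => p) i p (battlefieldPayoff v · i)
  rw [update_eq_self i fun _ => p] at hp
  rw [hp, bernoulliMean_update, ← bernoulliMean_battlefieldPayoff_update_one_sub_update_zero v p i]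
  ring

end BattlefieldPayoff

section BidProb

variable {κ : Type*}

/-- The probability that a bid vector drawn from `μ` competes on battlefield `j`. -/
noncomputable def bidProb (μ : Measure (κ → Bool)) (j : κ) : ℝ :=
  μ.real {A | A j = true}

theorem bidProb_mem_Icc (μ : Measure (κ → Bool)) [IsProbabilityMeasure μ] (j : κ) :
    bidProb μ j ∈ Icc (0 : ℝ) 1 :=
  ⟨measureReal_nonneg, measureReal_le_one⟩

theorem measurableSet_setOf_apply_eq_true (j : κ) :
    MeasurableSet {A : κ → Bool | A j = true} :=
  (measurable_pi_apply j : Measurable fun A : κ → Bool => A j) (measurableSet_singleton true)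

theorem map_eval_real_singleton (μ : Measure (κ → Bool)) [IsProbabilityMeasure μ]
    (j : κ) (b : Bool) :
    (μ.map (eval j)).real {b} = bernoulliWeight (bidProb μ j) b := by
  rw [map_measureReal_apply (measurable_pi_apply j) (measurableSet_singleton b)]
  cases b
  · have hcompl : (eval j : (κ → Bool) → Bool) ⁻¹' {false} = {A : κ → Bool | A j = true}ᶜ := by
      ext
      simp
    rw [hcompl, probReal_compl_eq_one_sub (measurableSet_setOf_apply_eq_true j)]
    rfl
  · rfl

theorem integral_pi_comp_eval {ι : Type*} [Fintype ι] [DecidableEq ι]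
    (P : ι → Measure (κ → Bool)) [∀ i, IsProbabilityMeasure (P i)] (j : κ)
    (f : (ι → Bool) → ℝ) :
    ∫ A, f (fun i => A i j) ∂Measure.pi P = bernoulliMean (fun i => bidProb (P i) j) f := by
  have heval (i : ι) : AEMeasurable (eval j) (P i) := (measurable_pi_apply j).aemeasurable
  have (i : ι) : IsProbabilityMeasure ((P i).map (eval j)) :=
    Measure.isProbabilityMeasure_map (heval i)
  have hcolumn : Measurable fun (A : ι → κ → Bool) i => A i j := by fun_prop
  have hmap : (Measure.pi P).map (fun A i => A i j) =
      Measure.pi fun i => (P i).map (eval j) :=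
    Measure.pi_map_pi heval
  rw [← integral_map hcolumn.aemeasurable (f := f) Integrable.of_finite.aestronglyMeasurable,
    hmap, integral_fintype Integrable.of_finite]
  refine Finset.sum_congr rfl fun c _ => ?_
  rw [smul_eq_mul, measureReal_def, Measure.pi_singleton, ENNReal.toReal_prod]
  exact congrArg (· * f c) (Finset.prod_congr rfl fun i _ => map_eval_real_singleton (P i) j (c i))

theorem sum_bidProb_le [Fintype κ] (ν : Measure (κ → Bool)) [IsProbabilityMeasure ν] {B : ℕ}
    (hν : ∀ᵐ A ∂ν, ∑ j, (if A j then (1 : ℕ) else 0) ≤ B) :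
    ∑ j, bidProb ν j ≤ B := by
  have hbid (j : κ) : bidProb ν j = ∫ A, (if A j then (1 : ℝ) else 0) ∂ν := by
    rw [bidProb, ← integral_indicator_one (measurableSet_setOf_apply_eq_true j)]
    simp [indicator_apply]
  calc ∑ j, bidProb ν j = ∫ A, ∑ j, (if A j then (1 : ℝ) else 0) ∂ν := by
        rw [integral_finsetSum _ fun j _ => Integrable.of_finite]
        exact Finset.sum_congr rfl fun j _ => hbid j
    _ ≤ ∫ _, (B : ℝ) ∂ν := by
        refine integral_mono_ae Integrable.of_finite Integrable.of_finite ?_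
        filter_upwards [hν] with A hA
        exact_mod_cast hA
    _ = B := by simp

end BidProb

section ExpectedPayoff

variable {k n : ℕ} (v : Fin n → ℝ)

theorem boolExpectedPayoff_eq_sum (P : Fin k → Measure (Fin n → Bool))
    (hP : ∀ i, IsProbabilityMeasure (P i)) (i₀ : Fin k) :
    boolExpectedPayoff v P hP i₀ =
      ∑ j, bernoulliMean (fun i => bidProb (P i) j) (battlefieldPayoff (v j) · i₀) := by
  have hpayoff (A : Fin k → Fin n → Bool) : boolBlottoPayoff v A i₀ =
      ∑ j, battlefieldPayoff (v j) (fun i => A i j) i₀ := by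
    simp only [boolBlottoPayoff, battlefieldPayoff]
  simp_rw [boolExpectedPayoff, hpayoff]
  rw [integral_finsetSum _ fun j _ => Integrable.of_finite]
  exact Finset.sum_congr rfl fun j _ => integral_pi_comp_eval P j (battlefieldPayoff (v j) · i₀)

theorem boolExpectedPayoff_devFamily_sub (μ ν : Measure (Fin n → Bool))
    (hμ : IsProbabilityMeasure μ) (hν : IsProbabilityMeasure ν) (i₀ : Fin k) :
    boolExpectedPayoff v (devFamily i₀ μ ν) (devFamily_prob i₀ μ ν hμ hν) i₀ -
      boolExpectedPayoff v (fun _ => μ) (fun _ => hμ) i₀ =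
        ∑ j, (bidProb ν j - bidProb μ j) * mMarg k (v j) (bidProb μ j) := by
  have hdev (j : Fin n) : (fun i => bidProb (devFamily i₀ μ ν i) j) =
      update (fun _ => bidProb μ j) i₀ (bidProb ν j) := by
    ext i
    simp only [devFamily, update_apply]
    split_ifs <;> rfl
  simp_rw [boolExpectedPayoff_eq_sum, hdev, ← Finset.sum_sub_distrib,
    bernoulliMean_battlefieldPayoff_update_sub, Fintype.card_fin]

end ExpectedPayoff

/-- `g` is the extended inverse `m_v⁻¹ : ℝ → [0, 1]` of the marginal utility `m_v = mMarg k v`. -/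
structure IsExtendedInverse (k : ℕ) (v : ℝ) (g : ℝ → ℝ) : Prop where
  apply_mMarg : ∀ p ∈ Icc (0 : ℝ) 1, g (mMarg k v p) = p
  eq_one : ∀ x : ℝ, x < v / k → g x = 1
  eq_zero : ∀ x : ℝ, ((k : ℝ) - 1) * v / k < x → g x = 0

namespace IsExtendedInverse

variable {k : ℕ} {v : ℝ} {g : ℝ → ℝ}

theorem trichotomy (hg : IsExtendedInverse k v g) (hk : 2 ≤ k) (x : ℝ) :
    (x < mMarg k v 1 ∧ g x = 1) ∨ (mMarg k v 0 < x ∧ g x = 0) ∨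
      (g x ∈ Icc (0 : ℝ) 1 ∧ mMarg k v (g x) = x) := by
  rcases lt_or_ge x (mMarg k v 1) with hone | hone
  · exact Or.inl ⟨hone, hg.eq_one x (by rwa [mMarg_one hk] at hone)⟩
  rcases lt_or_ge (mMarg k v 0) x with hzero | hzero
  · exact Or.inr (Or.inl ⟨hzero, hg.eq_zero x (by rwa [mMarg_zero] at hzero)⟩)
  obtain ⟨p, hp, rfl⟩ := intermediate_value_Icc' zero_le_one
    (continuous_mMarg (by lia : 1 ≤ k) v).continuousOn ⟨hone, hzero⟩
  rw [hg.apply_mMarg p hp]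
  exact Or.inr (Or.inr ⟨hp, rfl⟩)

theorem mem_Icc (hg : IsExtendedInverse k v g) (hk : 2 ≤ k) (x : ℝ) : g x ∈ Icc (0 : ℝ) 1 := by
  rcases hg.trichotomy hk x with ⟨-, h⟩ | ⟨-, h⟩ | ⟨h, -⟩
  · simp [h]
  · simp [h]
  · exact h

theorem sub_mul_mMarg_le (hg : IsExtendedInverse k v g) (hk : 2 ≤ k) (x : ℝ) {q : ℝ}
    (hq : q ∈ Icc (0 : ℝ) 1) : (q - g x) * mMarg k v (g x) ≤ (q - g x) * x := by
  rcases hg.trichotomy hk x with ⟨hx, hgx⟩ | ⟨hx, hgx⟩ | ⟨-, hx⟩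
  · rw [hgx]
    exact mul_le_mul_of_nonpos_left hx.le (sub_nonpos.mpr hq.2)
  · rw [hgx]
    exact mul_le_mul_of_nonneg_left hx.le (sub_nonneg.mpr hq.1)
  · rw [hx]

theorem antitone (hg : IsExtendedInverse k v g) (hk : 2 ≤ k) (hv : 0 ≤ v) : Antitone g := by
  intro x y hxy
  by_contra! hlt
  have hx := hg.mem_Icc hk x
  have hy := hg.mem_Icc hk y
  have hmx : mMarg k v (g x) ≤ x :=
    le_of_mul_le_mul_left (hg.sub_mul_mMarg_le hk x hy) (sub_pos.mpr hlt)
  have hmy : y ≤ mMarg k v (g y) :=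
    (mul_le_mul_left_of_neg (sub_neg.mpr hlt)).mp (hg.sub_mul_mMarg_le hk y hx)
  have hm : mMarg k v (g y) ≤ mMarg k v (g x) :=
    antitoneOn_mMarg (by lia) hv hx.2 hy.2 hlt.le
  obtain rfl : x = y := hxy.antisymm (hmy.trans (hm.trans hmx))
  exact hlt.false

theorem continuous (hg : IsExtendedInverse k v g) (hk : 2 ≤ k) (hv : 0 ≤ v) :
    Continuous g := by
  let f (x : ℝ) : Icc (0 : ℝ) 1 := ⟨g (-x), hg.mem_Icc hk _⟩
  have hmono : Monotone f := fun x y hxy => hg.antitone hk hv (neg_le_neg hxy)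
  have hsurj : Surjective f := fun p =>
    ⟨-mMarg k v p, Subtype.ext (by simp [f, hg.apply_mMarg p p.2])⟩
  have hf := hmono.continuous_of_surjective hsurj
  have hgf : g = fun x => (f (-x) : ℝ) := by
    ext x
    simp [f]
  rw [hgf]
  fun_prop

theorem eq_one_of_nonpos (hg : IsExtendedInverse k v g) (hk : 1 ≤ k) (hv : 0 < v) {x : ℝ}
    (hx : x ≤ 0) : g x = 1 :=
  hg.eq_one x (hx.trans_lt (div_pos hv (by exact_mod_cast hk)))

end IsExtendedInverse

theorem le_apply_sInf_setOf_le {f : ℝ → ℝ} (hf : Continuous f) {y : ℝ}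
    (hbdd : BddBelow {x | f x ≤ y}) : y ≤ f (sInf {x | f x ≤ y}) := by
  refine ge_of_tendsto (hf.continuousWithinAt (s := Iio (sInf {x | f x ≤ y}))) ?_
  filter_upwards [self_mem_nhdsWithin] with x hx
  by_contra! hlt
  exact (csInf_le hbdd hlt.le).not_gt hx

section BudgetMultiplier

variable {κ : Type*} [Fintype κ]

/-- The paper's `x*`, the multiplier of the budget constraint `∑ j, p j ≤ B`. For
`Fintype.card κ ≤ B` the infimum runs over all of `ℝ` and takes the junk value `0`; every `p* j` is
then still `1`, as it is for the infimum `-∞`. -/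
noncomputable def budgetMultiplier (g : κ → ℝ → ℝ) (B : ℝ) : ℝ :=
  sInf {x | ∑ j, g j x ≤ B}

variable {k : ℕ} {B : ℝ} {v : κ → ℝ} {g : κ → ℝ → ℝ}

theorem sum_extendedInverse_of_nonpos (hg : ∀ j, IsExtendedInverse k (v j) (g j)) (hk : 1 ≤ k)
    (hv : ∀ j, 0 < v j) {x : ℝ} (hx : x ≤ 0) : ∑ j, g j x = Fintype.card κ := by
  simp [fun j => (hg j).eq_one_of_nonpos hk (hv j) hx]

theorem nonneg_of_sum_extendedInverse_le (hg : ∀ j, IsExtendedInverse k (v j) (g j)) (hk : 1 ≤ k)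
    (hv : ∀ j, 0 < v j) (hB : B < Fintype.card κ) {x : ℝ} (hx : ∑ j, g j x ≤ B) : 0 ≤ x := by
  by_contra! hneg
  rw [sum_extendedInverse_of_nonpos hg hk hv hneg.le] at hx
  exact hx.not_gt hB

theorem budgetMultiplier_of_card_le (hg : ∀ j, IsExtendedInverse k (v j) (g j)) (hk : 2 ≤ k)
    (hB : Fintype.card κ ≤ B) : budgetMultiplier g B = 0 := by
  have huniv : {x | ∑ j, g j x ≤ B} = univ := eq_univ_of_forall fun x =>
    calc ∑ j, g j x ≤ ∑ _j : κ, (1 : ℝ) := Finset.sum_le_sum fun j _ => ((hg j).mem_Icc hk x).2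
      _ ≤ B := by simpa using hB
  rw [budgetMultiplier, huniv, Real.sInf_univ]

theorem budgetMultiplier_nonneg (hg : ∀ j, IsExtendedInverse k (v j) (g j)) (hk : 2 ≤ k)
    (hv : ∀ j, 0 < v j) : 0 ≤ budgetMultiplier g B := by
  rcases lt_or_ge B (Fintype.card κ) with hB | hB
  · exact Real.sInf_nonneg fun x hx => nonneg_of_sum_extendedInverse_le hg (by lia) hv hB hx
  · exact (budgetMultiplier_of_card_le hg hk hB).ge

theorem le_sum_apply_budgetMultiplier (hg : ∀ j, IsExtendedInverse k (v j) (g j)) (hk : 2 ≤ k)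
    (hv : ∀ j, 0 < v j) (hB : B ≤ Fintype.card κ) :
    B ≤ ∑ j, g j (budgetMultiplier g B) := by
  rcases hB.lt_or_eq with hlt | heq
  · have hcont : Continuous fun x => ∑ j, g j x :=
      continuous_finsetSum _ fun j _ => (hg j).continuous hk (hv j).le
    have hbdd : BddBelow {x | ∑ j, g j x ≤ B} :=
      ⟨0, fun _ hx => nonneg_of_sum_extendedInverse_le hg (by lia) hv hlt hx⟩
    exact le_apply_sInf_setOf_le hcont hbdd
  · rw [budgetMultiplier_of_card_le hg hk heq.ge, heq]
    exact (sum_extendedInverse_of_nonpos hg (by lia) hv le_rfl).ge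

end BudgetMultiplier

/-- The Boolean General Lotto version: the budget `B` is real and binds only in expectation. -/
theorem stmt15_general {k n : ℕ} (hk : 2 ≤ k) {B : ℝ} (hB : B ≤ n) {v : Fin n → ℝ}
    (hv : ∀ j, 0 < v j) {g : Fin n → ℝ → ℝ} (hg : ∀ j, IsExtendedInverse k (v j) (g j))
    (μ : Measure (Fin n → Bool)) (hμ : IsProbabilityMeasure μ)
    (hμmarg : ∀ j, μ {A | A j = true} = ENNReal.ofReal (g j (budgetMultiplier g B)))
    (i₀ : Fin k) (ν : Measure (Fin n → Bool)) (hν : IsProbabilityMeasure ν)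
    (hνbudget : ∑ j, bidProb ν j ≤ B) :
    boolExpectedPayoff v (devFamily i₀ μ ν) (devFamily_prob i₀ μ ν hμ hν) i₀ ≤
      boolExpectedPayoff v (fun _ => μ) (fun _ => hμ) i₀ := by
  set x := budgetMultiplier g B
  have hμprob (j : Fin n) : bidProb μ j = g j x := by
    rw [bidProb, measureReal_def, hμmarg, ENNReal.toReal_ofReal ((hg j).mem_Icc hk x).1]
  have hexhaust : B ≤ ∑ j, g j x := le_sum_apply_budgetMultiplier hg hk hv (by simpa using hB)
  rw [← sub_nonpos, boolExpectedPayoff_devFamily_sub v μ ν hμ hν]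
  simp_rw [hμprob]
  calc ∑ j, (bidProb ν j - g j x) * mMarg k (v j) (g j x)
      ≤ ∑ j, (bidProb ν j - g j x) * x :=
        Finset.sum_le_sum fun j _ => (hg j).sub_mul_mMarg_le hk x (bidProb_mem_Icc ν j)
    _ = (∑ j, bidProb ν j - ∑ j, g j x) * x := by
        rw [← Finset.sum_mul, Finset.sum_sub_distrib]
    _ ≤ 0 := mul_nonpos_of_nonpos_of_nonneg (sub_nonpos.mpr (hνbudget.trans hexhaust))
        (budgetMultiplier_nonneg hg hk hv)

theorem stmt15 (k n : ℕ) (hk : 3 ≤ k) (B : ℕ) (hB : B ≤ n)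
    (v : Fin n → ℝ) (hv : ∀ j, 0 < v j)
    (hsorted : ∀ i j : Fin n, i ≤ j → v j ≤ v i)
    -- `minv j` is the extended inverse `m_{v_j}^{-1} : ℝ → [0,1]`:
    (minv : Fin n → ℝ → ℝ)
    (hminv_inv : ∀ j, ∀ p ∈ Set.Icc (0 : ℝ) 1, minv j (mMarg k (v j) p) = p)
    (hminv_lo : ∀ j, ∀ x : ℝ, x < v j / k → minv j x = 1)
    (hminv_hi : ∀ j, ∀ x : ℝ, ((k : ℝ) - 1) * v j / k < x → minv j x = 0)
    -- `x* = inf {x : Σ_j m_{v_j}^{-1}(x) ≤ B}` and `p*_j = m_{v_j}^{-1}(x*)`: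
    (xstar : ℝ) (hxstar : xstar = sInf {x : ℝ | ∑ j, minv j x ≤ (B : ℝ)})
    (pstar : Fin n → ℝ) (hpstar : ∀ j, pstar j = minv j xstar)
    -- `μ` is a mixed strategy, a.s. within budget, with marginals `p*_j`:
    (μ : Measure (Fin n → Bool)) (hμ : IsProbabilityMeasure μ)
    (hμbudget : ∀ᵐ A ∂μ, ∑ j, (if A j then (1 : ℕ) else 0) ≤ B)
    (hμmarg : ∀ j, μ {A : Fin n → Bool | A j = true} = ENNReal.ofReal (pstar j)) :
    -- independent play of `μ` by all `k` players is a Nash equilibrium: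
    ∀ i₀ : Fin k, ∀ (ν : Measure (Fin n → Bool)) (hν : IsProbabilityMeasure ν),
      (∀ᵐ A ∂ν, ∑ j, (if A j then (1 : ℕ) else 0) ≤ B) →
      boolExpectedPayoff v (devFamily i₀ μ ν) (devFamily_prob i₀ μ ν hμ hν) i₀ ≤
        boolExpectedPayoff v (fun _ => μ) (fun _ => hμ) i₀ := by
  subst hxstar
  intro i₀ ν hν hνbudget
  exact stmt15_general (by lia) (by exact_mod_cast hB) hv
    (fun j => ⟨hminv_inv j, hminv_lo j, hminv_hi j⟩) μ hμ
    (fun j => (hμmarg j).trans (congrArg _ (hpstar j))) i₀ ν hν (sum_bidProb_le ν hνbudget)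
end
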